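/- arXiv:math/9605202 — 2 statements merged into one kernel-verified Lean document; each statement's English description precedes it below -/
import Mathlib

section
/- Let (d_n)_{n∈ℕ} be a sequence of integers with d_n ≥ 3 and let (F_n)_{n∈ℕ} be a sequence of finite fields. For each n, let Sp(2d_n, F_n) be the symplectic group of 2d_n × 2d_n matrices M over F_n satisfying M J Mᵀ = J, where J is the block matrix with blocks 0, 1, −1, 0 (1 the d_n × d_n identity), and let G_n = { diag(A, (A⁻¹)ᵀ) : A ∈ SL(d_n, F_n) } ≤ Sp(2d_n, F_n), the subgroup of block-diagonal matrices with blocks A and the inverse transpose of A. Then ∏_{n∈ℕ} Sp(2d_n, F_n) is finitely generated over the subgroup ∏_{n∈ℕ} G_n: there exists a finite subset S of ∏_n Sp(2d_n, F_n) such that ∏_n Sp(2d_n, F_n) = ⟨∏_n G_n ∪ S⟩. -/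
open Matrix

/-!
Let `H` be a subgroup of the product that contains the sequence of the matrices `J` and all
sequences `diag(A, (A⁻¹)ᵀ)` with `det A = 1`. The sequences `X` of symmetric matrices whose
unipotents `[1, X; 0, 1]` form an element of `H` are an additive group stable under `X ↦ A X Aᵀ`
for `det A = 1`. If a sequence of symmetric `E` lies in this group, `E x = 0` and `x E = x`, then
acting by `A = 1 + x` shows that `x + xᵀ + x xᵀ` lies in it too, and polarising gives
`x yᵀ + y xᵀ`.

Color the coordinates with five colors, each used on at most a third of them, and let `E`
project onto the coordinates avoiding the colors `a` and `b`. There are enough of these for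
`x yᵀ` to be an arbitrary block with rows of color `a` and columns of color `b`, so these
at most 25 projections, whatever the dimensions, yield all `T + Tᵀ`, then all diagonal matrices
of squares, and hence all symmetric matrices as soon as every element of the field has the form
`2 s + t²`. Conjugation by `J` gives the lower unipotents, and every symplectic matrix over a
field is a product of upper and lower unipotents and a matrix `diag(A, (A⁻¹)ᵀ)`.
-/

namespace SymplecticProduct

section Coloring

variable {l K : Type*} [Fintype l] [DecidableEq K]

/-- The elements of color `a` under the coloring `κ`, indexing the rows or columns of a block
of a matrix. -/
def colorClass (κ : l → K) (a : K) : Finset l := {i | κ i = a}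

/-- The elements whose color under `κ` is neither `a` nor `b`, the auxiliary coordinates used to
generate the blocks with rows of color `a` and columns of color `b`. -/
def colorsAvoiding (κ : l → K) (a b : K) : Finset l := {i | κ i ≠ a ∧ κ i ≠ b}

theorem disjoint_colorsAvoiding_left (κ : l → K) (a b : K) :
    Disjoint (colorsAvoiding κ a b) (colorClass κ a) :=
  Finset.disjoint_filter.2 fun _ _ h => h.1

theorem disjoint_colorsAvoiding_right (κ : l → K) (a b : K) :
    Disjoint (colorsAvoiding κ a b) (colorClass κ b) :=
  Finset.disjoint_filter.2 fun _ _ h => h.2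

theorem exists_coloring (hl : 3 ≤ Fintype.card l) :
    ∃ κ : l → Fin 5, ∀ a, 3 * (colorClass κ a).card ≤ Fintype.card l := by
  -- Cut an enumeration of `l` into runs of length `m`; five are enough as `card l ≤ 3 m + 2 ≤ 5 m`.
  set m := Fintype.card l / 3
  have m_pos : 0 < m := by lia
  let e := Fintype.equivFin l
  have div_lt (i : l) : (e i : ℕ) / m < 5 := by
    rw [Nat.div_lt_iff_lt_mul m_pos]
    lia
  let κ : l → Fin 5 := fun i => ⟨e i / m, div_lt i⟩
  refine ⟨κ, fun a => ?_⟩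
  have mod_injOn : Set.InjOn (fun i => (e i : ℕ) % m) (colorClass κ a) := by
    intro i hi j hj hmod
    have hκ : κ i = κ j := by
      rw [Finset.mem_coe, colorClass, Finset.mem_filter_univ] at hi hj
      rw [hi, hj]
    exact e.injective (Fin.ext (Nat.ext_div_mod (congrArg Fin.val hκ) hmod))
  have card_le : (colorClass κ a).card ≤ (Finset.range m).card :=
    Finset.card_le_card_of_injOn _
      (fun i _ => Finset.mem_coe.2 (Finset.mem_range.2 (Nat.mod_lt _ m_pos))) mod_injOn
  rw [Finset.card_range] at card_le
  lia

theorem card_colorClass_le_card_colorsAvoiding {κ : l → K}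
    (hκ : ∀ a, 3 * (colorClass κ a).card ≤ Fintype.card l) (a b : K) :
    (colorClass κ b).card ≤ (colorsAvoiding κ a b).card := by
  classical
  have hcover : Finset.univ ⊆ colorClass κ a ∪ colorClass κ b ∪ colorsAvoiding κ a b := by
    intro i _
    simp only [colorClass, colorsAvoiding, Finset.mem_union, Finset.mem_filter_univ]
    tauto
  have hcard : Fintype.card l ≤
      (colorClass κ a).card + (colorClass κ b).card + (colorsAvoiding κ a b).card :=
    (Finset.card_le_card hcover).trans <| (Finset.card_union_le _ _).trans <|
      Nat.add_le_add_right (Finset.card_union_le _ _) _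
  have := hκ a
  have := hκ b
  lia

end Coloring

section Symmetric

variable {l K R : Type*} [DecidableEq l] [DecidableEq K] [CommRing R]

theorem exists_two_mul_add_sq {F : Type*} [Field F] (hF : ringChar F = 2 → ∀ r : F, IsSquare r)
    (r : F) : ∃ s t : F, 2 * s + t ^ 2 = r := by
  by_cases h2 : ringChar F = 2
  · obtain ⟨t, rfl⟩ := hF h2 r
    exact ⟨0, t, by ring⟩
  · exact ⟨r / 2, 0, by rw [mul_div_cancel₀ r (Ring.two_ne_zero h2)]; ring⟩

theorem exists_eq_add_transpose_add_diagonal {X : Matrix l l R} (hX : X.IsSymm)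
    (hR : ∀ r : R, ∃ s t : R, 2 * s + t ^ 2 = r) :
    ∃ (T : Matrix l l R) (v : l → R), X = T + Tᵀ + diagonal (v ^ 2) := by
  classical
  choose s v hsv using fun i => hR (X i i)
  let T : Matrix l l R :=
    of fun i j => if i = j then s i else if WellOrderingRel i j then X i j else 0
  refine ⟨T, v, ?_⟩
  ext i j
  obtain rfl | hij := eq_or_ne i j
  · simp [T, ← hsv i, two_mul]
  · obtain h | h | h := trichotomous_of WellOrderingRel i j
    · simp [T, hij, hij.symm, h, asymm h]
    · exact absurd h hij
    · simp [T, hij, hij.symm, h, asymm h, hX.apply]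

/-- The diagonal idempotent matrix projecting onto the coordinates in `s`; the unipotents of
such projections are the generators. -/
def coordProj (R : Type*) [CommRing R] (s : Finset l) : Matrix l l R :=
  diagonal fun i => if i ∈ s then 1 else 0

theorem isSymm_coordProj (s : Finset l) : (coordProj R s).IsSymm :=
  isSymm_diagonal _

variable [Fintype l]

theorem coordProj_mul_self (s : Finset l) : coordProj R s * coordProj R s = coordProj R s := by
  simp [coordProj, ← ite_and]

theorem coordProj_mul_diagonal (s : Finset l) (v : l → R) :
    coordProj R s * diagonal v = diagonal v * coordProj R s := by
  simp [coordProj, mul_comm]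

theorem coordProj_mul_coordProj_of_disjoint {s t : Finset l} (h : Disjoint s t) :
    coordProj R s * coordProj R t = 0 := by
  rw [coordProj, coordProj, diagonal_mul_diagonal, diagonal_eq_zero]
  ext i
  have : i ∈ s → i ∉ t := fun hs => Finset.disjoint_left.1 h hs
  by_cases hs : i ∈ s <;> simp_all

theorem sum_coordProj_colorClass [Fintype K] (κ : l → K) :
    ∑ a, coordProj R (colorClass κ a) = 1 := by
  ext i j
  simp [coordProj, colorClass, Matrix.sum_apply, diagonal_apply, one_apply, Finset.sum_ite_irrel]

theorem exists_mul_transpose_eq_coordProj {s t : Finset l} (h : s.card ≤ t.card) :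
    ∃ x : Matrix l l R,
      coordProj R s * x = x ∧ x * coordProj R t = x ∧ x * xᵀ = coordProj R s := by
  obtain ⟨f⟩ : Nonempty (s ↪ t) := Function.Embedding.nonempty_of_card_le (by simpa using h)
  obtain ⟨σ, hσ⟩ := Equiv.Perm.exists_extending_pair (fun i : s => (i : l)) (fun i => f i)
    Subtype.val_injective (Subtype.val_injective.comp f.injective)
  have mem_of_symm_mem (j : l) (hj : σ.symm j ∈ s) : j ∈ t := by
    have := hσ ⟨_, hj⟩
    rw [σ.apply_symm_apply] at this
    exact this ▸ (f _).2
  refine ⟨(coordProj R s).submatrix id σ.symm, ?_, ?_, ?_⟩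
  · have := (submatrix_mul (coordProj R s) (coordProj R s) id id σ.symm Function.bijective_id)
    rw [coordProj_mul_self] at this
    exact this.symm
  · ext i j
    simp only [coordProj, mul_diagonal, submatrix_apply, diagonal_apply]
    grind
  · rw [transpose_submatrix, (isSymm_coordProj s).eq, submatrix_mul_equiv, coordProj_mul_self,
      submatrix_id_id]

theorem det_one_add_eq_one {E x : Matrix l l R} (hEx : E * x = 0) (hxE : x * E = x) :
    (1 + x).det = 1 := by
  rw [← hxE, det_one_add_mul_comm, hEx, add_zero, det_one]

theorem one_add_mul_mul_transpose {E x : Matrix l l R} (hE : E.IsSymm) (hxE : x * E = x) :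
    (1 + x) * E * (1 + x)ᵀ = E + (x + xᵀ + x * xᵀ) := by
  have hEx : E * xᵀ = xᵀ := by rw [← hE.eq, ← transpose_mul, hxE]
  rw [add_mul, one_mul, hxE, transpose_add, transpose_one, mul_add, mul_one, add_mul, hEx]
  abel

end Symmetric

section CongrInvariant

variable {ι K : Type*} {l R : ι → Type*} [∀ i, Fintype (l i)] [∀ i, DecidableEq (l i)]
  [∀ i, CommRing (R i)] [Finite K] [DecidableEq K]

/-- A group of sequences of matrices that is stable under the congruence action
`X ↦ A X Aᵀ` of the product of the special linear groups. -/
def IsCongrInvariant (N : AddSubgroup (∀ i, Matrix (l i) (l i) (R i))) : Prop :=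
  ∀ A : ∀ i, Matrix (l i) (l i) (R i), (∀ i, (A i).det = 1) →
    ∀ X ∈ N, (fun i => A i * X i * (A i)ᵀ) ∈ N

variable {N : AddSubgroup (∀ i, Matrix (l i) (l i) (R i))}

theorem IsCongrInvariant.add_transpose_add_mem (hN : IsCongrInvariant N)
    {E x : ∀ i, Matrix (l i) (l i) (R i)} (hE : E ∈ N) (hsymm : ∀ i, (E i).IsSymm)
    (hEx : ∀ i, E i * x i = 0) (hxE : ∀ i, x i * E i = x i) :
    (fun i => x i + (x i)ᵀ + x i * (x i)ᵀ) ∈ N := by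
  have := N.sub_mem (hN _ (fun i => det_one_add_eq_one (hEx i) (hxE i)) E hE) hE
  simp only [one_add_mul_mul_transpose (hsymm _) (hxE _)] at this
  simpa [Pi.sub_def] using this

theorem IsCongrInvariant.mul_transpose_add_mem (hN : IsCongrInvariant N)
    {E x y : ∀ i, Matrix (l i) (l i) (R i)} (hE : E ∈ N) (hsymm : ∀ i, (E i).IsSymm)
    (hEx : ∀ i, E i * x i = 0) (hxE : ∀ i, x i * E i = x i)
    (hEy : ∀ i, E i * y i = 0) (hyE : ∀ i, y i * E i = y i) :
    (fun i => x i * (y i)ᵀ + (x i * (y i)ᵀ)ᵀ) ∈ N := by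
  have hxy := hN.add_transpose_add_mem (x := x + y) hE hsymm
    (fun i => by simp [mul_add, hEx, hEy]) (fun i => by simp [add_mul, hxE, hyE])
  have hx := hN.add_transpose_add_mem hE hsymm hEx hxE
  have hy := hN.add_transpose_add_mem hE hsymm hEy hyE
  convert N.sub_mem (N.sub_mem hxy hx) hy using 1
  ext1 i
  simp only [Pi.add_apply, Pi.sub_apply, transpose_add, transpose_mul, transpose_transpose]
  noncomm_ring

theorem IsCongrInvariant.block_add_transpose_mem (hN : IsCongrInvariant N)
    {a b c : ∀ i, Finset (l i)} (hca : ∀ i, Disjoint (c i) (a i))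
    (hcb : ∀ i, Disjoint (c i) (b i)) (hbc : ∀ i, (b i).card ≤ (c i).card)
    (hc : (fun i => coordProj (R i) (c i)) ∈ N) (T : ∀ i, Matrix (l i) (l i) (R i)) :
    (fun i => coordProj (R i) (a i) * T i * coordProj (R i) (b i) +
      (coordProj (R i) (a i) * T i * coordProj (R i) (b i))ᵀ) ∈ N := by
  choose y hby hyc hyy using fun i => exists_mul_transpose_eq_coordProj (R := R i) (hbc i)
  have hcy (i) : coordProj (R i) (c i) * y i = 0 := by
    rw [← hby, ← Matrix.mul_assoc, coordProj_mul_coordProj_of_disjoint (hcb i), Matrix.zero_mul]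
  have hcx (i) : coordProj (R i) (c i) * (coordProj (R i) (a i) * T i * y i) = 0 := by
    simp only [← Matrix.mul_assoc, coordProj_mul_coordProj_of_disjoint (hca i), Matrix.zero_mul]
  simpa only [Matrix.mul_assoc, hyy] using
    hN.mul_transpose_add_mem hc (fun i => isSymm_coordProj _) hcx
      (fun i => by rw [Matrix.mul_assoc, hyc]) hcy hyc

theorem IsCongrInvariant.add_transpose_mem (hN : IsCongrInvariant N) {κ : ∀ i, l i → K}
    (hκ : ∀ i a, 3 * (colorClass (κ i) a).card ≤ Fintype.card (l i))
    (hproj : ∀ a b, (fun i => coordProj (R i) (colorsAvoiding (κ i) a b)) ∈ N)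
    (T : ∀ i, Matrix (l i) (l i) (R i)) : (fun i => T i + (T i)ᵀ) ∈ N := by
  have := Fintype.ofFinite K
  have hblocks := N.sum_mem fun a (_ : a ∈ Finset.univ) => N.sum_mem fun b (_ : b ∈ Finset.univ) =>
    hN.block_add_transpose_mem (fun i => disjoint_colorsAvoiding_left (κ i) a b)
      (fun i => disjoint_colorsAvoiding_right (κ i) a b)
      (fun i => card_colorClass_le_card_colorsAvoiding (hκ i) a b) (hproj a b) T
  convert hblocks using 1
  ext1 i
  simp only [Finset.sum_apply, Finset.sum_add_distrib, ← transpose_sum, ← Finset.mul_sum,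
    ← Finset.sum_mul, sum_coordProj_colorClass, Matrix.one_mul, Matrix.mul_one]

theorem IsCongrInvariant.diagonal_sq_mem (hN : IsCongrInvariant N) {κ : ∀ i, l i → K}
    (hκ : ∀ i a, 3 * (colorClass (κ i) a).card ≤ Fintype.card (l i))
    (hproj : ∀ a b, (fun i => coordProj (R i) (colorsAvoiding (κ i) a b)) ∈ N)
    (v : ∀ i, l i → R i) : (fun i => diagonal (v i ^ 2)) ∈ N := by
  have hblock (a : K) :
      (fun i => diagonal (v i ^ 2) * coordProj (R i) (colorClass (κ i) a)) ∈ N := by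
    choose y hay hyc hyy using fun i => exists_mul_transpose_eq_coordProj (R := R i)
      (card_colorClass_le_card_colorsAvoiding (hκ i) a a)
    have hcx (i) : coordProj (R i) (colorsAvoiding (κ i) a a) * (diagonal (v i) * y i) = 0 := by
      rw [← hay, ← Matrix.mul_assoc, coordProj_mul_diagonal, Matrix.mul_assoc,
        ← Matrix.mul_assoc (coordProj _ _),
        coordProj_mul_coordProj_of_disjoint (disjoint_colorsAvoiding_left (κ i) a a),
        Matrix.zero_mul, Matrix.mul_zero]
    have hshear := hN.add_transpose_add_mem (hproj a a) (fun i => isSymm_coordProj _) hcx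
      (fun i => by rw [Matrix.mul_assoc, hyc])
    convert N.sub_mem hshear (hN.add_transpose_mem hκ hproj fun i => diagonal (v i) * y i) using 1
    ext1 i
    calc diagonal (v i ^ 2) * coordProj (R i) (colorClass (κ i) a)
        = diagonal (v i) * (y i * (y i)ᵀ) * diagonal (v i) := by
          rw [hyy, Matrix.mul_assoc, coordProj_mul_diagonal, ← Matrix.mul_assoc,
            diagonal_mul_diagonal', sq]
          rfl
      _ = diagonal (v i) * y i * (diagonal (v i) * y i)ᵀ := by
          simp only [transpose_mul, diagonal_transpose, Matrix.mul_assoc]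
      _ = _ := by simp
  have := Fintype.ofFinite K
  convert N.sum_mem fun a (_ : a ∈ Finset.univ) => hblock a using 1
  ext1 i
  rw [Finset.sum_apply, ← Finset.mul_sum, sum_coordProj_colorClass, Matrix.mul_one]

theorem IsCongrInvariant.mem_of_isSymm (hN : IsCongrInvariant N) {κ : ∀ i, l i → K}
    (hκ : ∀ i a, 3 * (colorClass (κ i) a).card ≤ Fintype.card (l i))
    (hproj : ∀ a b, (fun i => coordProj (R i) (colorsAvoiding (κ i) a b)) ∈ N)
    (hR : ∀ i, ∀ r : R i, ∃ s t : R i, 2 * s + t ^ 2 = r)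
    {X : ∀ i, Matrix (l i) (l i) (R i)} (hX : ∀ i, (X i).IsSymm) : X ∈ N := by
  choose T v hTv using fun i => exists_eq_add_transpose_add_diagonal (hX i) (hR i)
  rw [funext hTv]
  exact N.add_mem (hN.add_transpose_mem hκ hproj T) (hN.diagonal_sq_mem hκ hproj v)

end CongrInvariant

section Decomposition

variable {l F R : Type*} [DecidableEq l] [Field F] [CommRing R]

/-- The block upper unitriangular matrix with upper right block `X`. For symmetric `X`
these form the unipotent radical of the Siegel parabolic subgroup. -/
def upper (X : Matrix l l R) : Matrix (l ⊕ l) (l ⊕ l) R := fromBlocks 1 X 0 1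

/-- The block lower unitriangular matrix with lower left block `Y`, conjugate to
`upper (-Y)` by `J`. -/
def lower (Y : Matrix l l R) : Matrix (l ⊕ l) (l ⊕ l) R := fromBlocks 1 0 Y 1

theorem upper_zero : upper (0 : Matrix l l R) = 1 :=
  fromBlocks_one

variable [Fintype l]

theorem exists_isSymm_isUnit_add_mul_of_isIdempotentElem {A E : Matrix l l F}
    (hE : IsIdempotentElem E) (hsymm : E.IsSymm) (hAE : Aᵀ * E = E * A)
    (hker : ∀ x, A *ᵥ x = 0 → E *ᵥ x = 0 → x = 0) :
    ∃ Y : Matrix l l F, Y.IsSymm ∧ IsUnit (A + Y * E) := by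
  have hEAE : E * A * E = E * A := by rw [← hAE, Matrix.mul_assoc, hE.eq]
  -- `A + (E - E A) E = (1 - E) A + E`, since `E A` vanishes on the kernel of `E`.
  refine ⟨E - E * A, ?_, ?_⟩
  · rw [IsSymm, transpose_sub, transpose_mul, hsymm.eq, hAE]
  rw [sub_mul, hE.eq, hEAE, ← mulVec_injective_iff_isUnit, ← coe_mulVecLin,
    ← LinearMap.ker_eq_bot, ker_mulVecLin_eq_bot_iff]
  intro x hx
  have hEx : E *ᵥ x = 0 := by
    have hmul : E * (A + (E - E * A)) = E := by
      rw [mul_add, mul_sub, ← Matrix.mul_assoc, hE.eq, add_sub_cancel]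
    rw [← hmul, ← mulVec_mulVec, hx, mulVec_zero]
  have hEAx : (E * A) *ᵥ x = 0 := by rw [← hAE, ← mulVec_mulVec, hEx, mulVec_zero]
  refine hker x ?_ hEx
  rwa [add_mulVec, sub_mulVec, hEx, hEAx, sub_zero, add_zero] at hx

theorem exists_isUnit_mul_mul_isIdempotentElem_isSymm (C : Matrix l l F) :
    ∃ V U : Matrix l l F, IsUnit V ∧ IsUnit U ∧ IsIdempotentElem (V * C * U) ∧
      (V * C * U).IsSymm := by
  obtain ⟨V, U, e, hV, hU, hVCU⟩ := exists_rank_normal_form C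
  refine ⟨V, U, hV, hU, ?_, ?_⟩
  · rw [IsIdempotentElem, hVCU, submatrix_mul_equiv, fromBlocks_multiply]
    simp
  · rw [IsSymm, hVCU, transpose_submatrix, fromBlocks_transpose]
    simp

theorem exists_isSymm_isUnit_add_mul {A C : Matrix l l F} (hAC : Aᵀ * C = Cᵀ * A)
    (hker : ∀ x, A *ᵥ x = 0 → C *ᵥ x = 0 → x = 0) :
    ∃ X : Matrix l l F, X.IsSymm ∧ IsUnit (A + X * C) := by
  obtain ⟨V, U, hV, hU, hidem, hsymm⟩ := exists_isUnit_mul_mul_isIdempotentElem_isSymm C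
  have hV' : IsUnit Vᵀ := by rwa [isUnit_transpose]
  obtain ⟨A', hA'⟩ : ∃ A', Vᵀ * A' = A * U := ⟨hV'.unit⁻¹ * (A * U), by
    rw [← Matrix.mul_assoc, hV'.mul_val_inv, Matrix.one_mul]⟩
  have hA'E : A'ᵀ * (V * C * U) = V * C * U * A' := by
    calc A'ᵀ * (V * C * U) = (Vᵀ * A')ᵀ * (C * U) := by
          simp only [transpose_mul, transpose_transpose, Matrix.mul_assoc]
      _ = Uᵀ * (Aᵀ * C) * U := by simp only [hA', transpose_mul, Matrix.mul_assoc]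
      _ = (C * U)ᵀ * (Vᵀ * A') := by simp only [hAC, hA', transpose_mul, Matrix.mul_assoc]
      _ = (V * C * U)ᵀ * A' := by simp only [transpose_mul, Matrix.mul_assoc]
      _ = V * C * U * A' := by rw [hsymm.eq]
  have hker' (x) (hAx : A' *ᵥ x = 0) (hEx : (V * C * U) *ᵥ x = 0) : x = 0 := by
    refine (mulVec_injective_of_isUnit hU) ?_
    rw [mulVec_zero]
    refine hker _ ?_ (mulVec_injective_of_isUnit hV ?_)
    · rw [mulVec_mulVec, ← hA', ← mulVec_mulVec, hAx, mulVec_zero]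
    · rw [mulVec_mulVec, mulVec_mulVec, hEx, mulVec_zero]
  obtain ⟨Y, hY, hunit⟩ :=
    exists_isSymm_isUnit_add_mul_of_isIdempotentElem hidem hsymm hA'E hker'
  refine ⟨Vᵀ * Y * V, ?_, ?_⟩
  · rw [IsSymm, transpose_mul, transpose_mul, transpose_transpose, hY.eq, Matrix.mul_assoc]
  · have hfactor : (A + Vᵀ * Y * V * C) * U = Vᵀ * (A' + Y * (V * C * U)) := by
      simp only [mul_add, add_mul, hA', Matrix.mul_assoc]
    exact isUnit_of_mul_isUnit_left (hfactor ▸ hV'.mul hunit)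

theorem exists_diagonal_det_eq [Nonempty l] (r : R) : ∃ v : l → R, (diagonal v).det = r :=
  ⟨Pi.mulSingle (Classical.arbitrary l) r, by rw [det_diagonal, Fintype.prod_pi_mulSingle']⟩

theorem isSymm_mul_inv {A C : Matrix l l R} (hAC : Aᵀ * C = Cᵀ * A) (hA : IsUnit A.det) :
    (C * A⁻¹).IsSymm := by
  have hAT : IsUnit Aᵀ.det := isUnit_det_transpose A hA
  rw [IsSymm, transpose_mul, transpose_nonsing_inv]
  calc Aᵀ⁻¹ * Cᵀ = Aᵀ⁻¹ * (Cᵀ * A) * A⁻¹ := by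
        rw [Matrix.mul_assoc, mul_nonsing_inv_cancel_right _ _ hA]
    _ = C * A⁻¹ := by rw [← hAC, nonsing_inv_mul_cancel_left _ _ hAT]

/-- The block diagonal matrix `diag(A, (A⁻¹)ᵀ)`, an element of the Levi subgroup of the symplectic
group if `A` is invertible (for other `A` the inverse takes its junk value `0`). -/
noncomputable def levi (A : Matrix l l R) : Matrix (l ⊕ l) (l ⊕ l) R := fromBlocks A 0 0 A⁻¹ᵀ

theorem levi_eq_of_det_eq_one {A : Matrix l l R} (hA : A.det = 1) :
    levi A = fromBlocks A 0 0 A.adjugateᵀ := by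
  rw [levi, inv_def, hA, Ring.inverse_one, one_smul]

theorem upper_mem_symplecticGroup {X : Matrix l l R} (hX : X.IsSymm) :
    upper X ∈ symplecticGroup l R := by
  rw [upper, SymplecticGroup.fromBlocks_mem_iff]
  simp [hX.eq]

theorem levi_mem_symplecticGroup {A : Matrix l l R} (hA : IsUnit A.det) :
    levi A ∈ symplecticGroup l R := by
  rw [levi, SymplecticGroup.fromBlocks_mem_iff]
  simp [← transpose_mul, nonsing_inv_mul _ hA]

theorem upper_mul_upper (X Y : Matrix l l R) : upper X * upper Y = upper (X + Y) := by
  simp [upper, fromBlocks_multiply, add_comm]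

theorem inv_upper (X : Matrix l l R) : (upper X)⁻¹ = upper (-X) :=
  inv_eq_right_inv (by rw [upper_mul_upper, add_neg_cancel, upper_zero])

theorem levi_mul_levi (A B : Matrix l l R) : levi A * levi B = levi (A * B) := by
  simp [levi, fromBlocks_multiply, Matrix.mul_inv_rev]

theorem levi_mul_upper_mul_levi_inv {A : Matrix l l R} (hA : IsUnit A.det) (X : Matrix l l R) :
    levi A * upper X * levi A⁻¹ = upper (A * X * Aᵀ) := by
  simp [levi, upper, fromBlocks_multiply, nonsing_inv_nonsing_inv _ hA, mul_nonsing_inv _ hA,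
    ← transpose_mul]

theorem J_mul_upper_neg_mul_inv_J (Y : Matrix l l R) :
    J l R * upper (-Y) * (J l R)⁻¹ = lower Y := by
  rw [J_inv]
  simp [J, upper, lower, fromBlocks_multiply, fromBlocks_neg]

theorem upper_mul_lower_mul_upper_mul_J {A : Matrix l l R} (hsymm : A.IsSymm)
    (hA : IsUnit A.det) : upper A * lower (-A⁻¹) * upper A * J l R = levi A := by
  simp [J, upper, lower, levi, fromBlocks_multiply, mul_nonsing_inv _ hA,
    nonsing_inv_mul _ hA, transpose_nonsing_inv, hsymm.eq]

theorem fromBlocks_eq_lower_mul_levi_mul_upper {A B C D : Matrix l l R}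
    (hM : fromBlocks A B C D ∈ symplecticGroup l R) (hA : IsUnit A.det) :
    fromBlocks A B C D = lower (C * A⁻¹) * levi A * upper (A⁻¹ * B) := by
  obtain ⟨hAC, -, hAD⟩ := SymplecticGroup.fromBlocks_mem_iff.1 hM
  have hD : D = C * A⁻¹ * B + A⁻¹ᵀ := by
    have hA' : IsUnit Aᵀ.det := isUnit_det_transpose A hA
    calc D = Aᵀ⁻¹ * (Cᵀ * B + 1) := by
          rw [← hAD, add_sub_cancel, nonsing_inv_mul_cancel_left _ _ hA']
      _ = (C * A⁻¹)ᵀ * B + A⁻¹ᵀ := by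
          rw [mul_add, Matrix.mul_one, transpose_mul, transpose_nonsing_inv, Matrix.mul_assoc]
      _ = C * A⁻¹ * B + A⁻¹ᵀ := by rw [(isSymm_mul_inv hAC hA).eq]
  simp [lower, levi, upper, fromBlocks_multiply, nonsing_inv_mul_cancel_right _ _ hA,
    mul_nonsing_inv_cancel_left _ _ hA, ← hD, ← Matrix.mul_assoc]

theorem isSymm_inv_mul_of_fromBlocks_mem {A B C D : Matrix l l R}
    (hM : fromBlocks A B C D ∈ symplecticGroup l R) (hA : IsUnit A.det) : (A⁻¹ * B).IsSymm := by
  have hM' := SymplecticGroup.transpose_mem hM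
  rw [fromBlocks_transpose, SymplecticGroup.fromBlocks_mem_iff] at hM'
  have := (isSymm_mul_inv hM'.1 (isUnit_det_transpose A hA)).transpose
  rwa [transpose_mul, transpose_transpose, transpose_nonsing_inv, transpose_transpose] at this

theorem exists_isSymm_isUnit_add_mul_of_fromBlocks_mem {A B C D : Matrix l l F}
    (hM : fromBlocks A B C D ∈ symplecticGroup l F) :
    ∃ X : Matrix l l F, X.IsSymm ∧ IsUnit (A + X * C) := by
  refine exists_isSymm_isUnit_add_mul (SymplecticGroup.fromBlocks_mem_iff.1 hM).1 fun x hA hC => ?_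
  have hM0 : fromBlocks A B C D *ᵥ Sum.elim x 0 = fromBlocks A B C D *ᵥ 0 := by
    simp [fromBlocks_mulVec, hA, hC]
  have := mulVec_injective_of_isUnit
    ((isUnit_iff_isUnit_det _).2 (SymplecticGroup.symplectic_det hM)) hM0
  simpa using congrArg (· ∘ Sum.inl) this

theorem exists_eq_upper_mul_lower_mul_levi_mul_upper {M : Matrix (l ⊕ l) (l ⊕ l) F}
    (hM : M ∈ symplecticGroup l F) :
    ∃ X Y A Z : Matrix l l F, X.IsSymm ∧ Y.IsSymm ∧ IsUnit A.det ∧ Z.IsSymm ∧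
      M = upper X * lower Y * levi A * upper Z := by
  obtain ⟨A, B, C, D, rfl⟩ : ∃ A B C D, M = fromBlocks A B C D :=
    ⟨_, _, _, _, (fromBlocks_toBlocks M).symm⟩
  obtain ⟨X, hX, hAX⟩ := exists_isSymm_isUnit_add_mul_of_fromBlocks_mem hM
  rw [isUnit_iff_isUnit_det] at hAX
  have hXM : upper X * fromBlocks A B C D = fromBlocks (A + X * C) (B + X * D) C D := by
    simp [upper, fromBlocks_multiply]
  have hmem := mul_mem (upper_mem_symplecticGroup hX) hM
  rw [hXM] at hmem
  refine ⟨-X, _, _, _, hX.neg, isSymm_mul_inv (SymplecticGroup.fromBlocks_mem_iff.1 hmem).1 hAX,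
    hAX, isSymm_inv_mul_of_fromBlocks_mem hmem hAX, ?_⟩
  rw [Matrix.mul_assoc (upper _), Matrix.mul_assoc (upper _),
    ← fromBlocks_eq_lower_mul_levi_mul_upper hmem hAX, ← hXM, ← Matrix.mul_assoc,
    upper_mul_upper, neg_add_cancel, upper_zero, Matrix.one_mul]

end Decomposition

section Product

variable {ι : Type*} {l : ι → Type*} [∀ i, Fintype (l i)] [∀ i, DecidableEq (l i)]

section CommRing

variable {R : ι → Type*} [∀ i, CommRing (R i)]
  {H : Subgroup (∀ i, symplecticGroup (l i) (R i))}

/-- The elements of `H`, viewed as sequences of matrices, so that membership of a sequence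
can be expressed before one knows that its terms are symplectic. -/
def matrixSubmonoid (H : Subgroup (∀ i, symplecticGroup (l i) (R i))) :
    Submonoid (∀ i, Matrix (l i ⊕ l i) (l i ⊕ l i) (R i)) :=
  H.toSubmonoid.map (MonoidHom.piMap fun i => (symplecticGroup (l i) (R i)).subtype)

theorem coe_mem_matrixSubmonoid {g : ∀ i, symplecticGroup (l i) (R i)} :
    (fun i => (g i : Matrix (l i ⊕ l i) (l i ⊕ l i) (R i))) ∈ matrixSubmonoid H ↔ g ∈ H := by
  refine ⟨?_, fun hg => ⟨g, hg, rfl⟩⟩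
  rintro ⟨g', hg', h⟩
  obtain rfl : g' = g := funext fun i => Subtype.ext (congrFun h i)
  exact hg'

theorem inv_mem_matrixSubmonoid {M : ∀ i, Matrix (l i ⊕ l i) (l i ⊕ l i) (R i)}
    (hM : M ∈ matrixSubmonoid H) : (fun i => (M i)⁻¹) ∈ matrixSubmonoid H := by
  obtain ⟨g, hg, rfl⟩ := hM
  exact ⟨g⁻¹, H.inv_mem hg, funext fun i => SymplecticGroup.coe_inv' (g i)⟩

/-- The sequences `X` for which the unipotent elements `upper (X i)` form an element of `H`. -/
def upperPart (H : Subgroup (∀ i, symplecticGroup (l i) (R i))) :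
    AddSubgroup (∀ i, Matrix (l i) (l i) (R i)) where
  carrier := {X | (fun i => upper (X i)) ∈ matrixSubmonoid H}
  zero_mem' := by
    simpa only [Set.mem_ofPred_eq, Pi.zero_apply, upper_zero, Pi.one_def] using
      (matrixSubmonoid H).one_mem
  add_mem' hX hY := by
    simpa only [Set.mem_ofPred_eq, Pi.mul_def, Pi.add_apply, upper_mul_upper] using
      (matrixSubmonoid H).mul_mem hX hY
  neg_mem' hX := by
    simpa only [Set.mem_ofPred_eq, Pi.neg_apply, inv_upper] using inv_mem_matrixSubmonoid hX

theorem mem_upperPart {X : ∀ i, Matrix (l i) (l i) (R i)} :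
    X ∈ upperPart H ↔ (fun i => upper (X i)) ∈ matrixSubmonoid H :=
  Iff.rfl

theorem isCongrInvariant_upperPart
    (hSL : ∀ A : ∀ i, Matrix (l i) (l i) (R i), (∀ i, (A i).det = 1) →
      (fun i => levi (A i)) ∈ matrixSubmonoid H) : IsCongrInvariant (upperPart H) := by
  intro A hA X hX
  have hunit (i) : IsUnit (A i).det := by simp [hA i]
  have hinv := hSL (fun i => (A i)⁻¹) fun i => by simp [det_nonsing_inv, hA i]
  simpa only [mem_upperPart, Pi.mul_def, levi_mul_upper_mul_levi_inv (hunit _)] using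
    mul_mem (mul_mem (hSL A hA) hX) hinv

theorem lower_mem_matrixSubmonoid (hJ : (fun i => J (l i) (R i)) ∈ matrixSubmonoid H)
    {Y : ∀ i, Matrix (l i) (l i) (R i)} (hY : Y ∈ upperPart H) :
    (fun i => lower (Y i)) ∈ matrixSubmonoid H := by
  simpa only [Pi.mul_def, Pi.neg_apply, J_mul_upper_neg_mul_inv_J] using
    mul_mem (mul_mem hJ (mem_upperPart.1 (neg_mem hY))) (inv_mem_matrixSubmonoid hJ)

theorem levi_mem_matrixSubmonoid_of_isSymm
    (hJ : (fun i => J (l i) (R i)) ∈ matrixSubmonoid H)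
    (hU : ∀ X : ∀ i, Matrix (l i) (l i) (R i), (∀ i, (X i).IsSymm) → X ∈ upperPart H)
    {A : ∀ i, Matrix (l i) (l i) (R i)} (hsymm : ∀ i, (A i).IsSymm)
    (hA : ∀ i, IsUnit (A i).det) : (fun i => levi (A i)) ∈ matrixSubmonoid H := by
  have hupper := mem_upperPart.1 (hU A hsymm)
  have hlower := lower_mem_matrixSubmonoid hJ (hU (fun i => -(A i)⁻¹) fun i => by
    rw [IsSymm, transpose_neg, transpose_nonsing_inv, (hsymm i).eq])
  simpa only [Pi.mul_def, upper_mul_lower_mul_upper_mul_J (hsymm _) (hA _)] using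
    mul_mem (mul_mem (mul_mem hupper hlower) hupper) hJ

theorem levi_mem_matrixSubmonoid [∀ i, Nonempty (l i)]
    (hSL : ∀ A : ∀ i, Matrix (l i) (l i) (R i), (∀ i, (A i).det = 1) →
      (fun i => levi (A i)) ∈ matrixSubmonoid H)
    (hJ : (fun i => J (l i) (R i)) ∈ matrixSubmonoid H)
    (hU : ∀ X : ∀ i, Matrix (l i) (l i) (R i), (∀ i, (X i).IsSymm) → X ∈ upperPart H)
    {A : ∀ i, Matrix (l i) (l i) (R i)} (hA : ∀ i, IsUnit (A i).det) :
    (fun i => levi (A i)) ∈ matrixSubmonoid H := by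
  choose v hv using fun i => exists_diagonal_det_eq (l := l i) (A i).det
  have hunit (i) : IsUnit (diagonal (v i)).det := (hv i).symm ▸ hA i
  have hdet (i) : (A i * (diagonal (v i))⁻¹).det = 1 := by
    rw [det_mul, ← hv, ← det_mul, mul_nonsing_inv _ (hunit i), det_one]
  have hdiag := levi_mem_matrixSubmonoid_of_isSymm hJ hU (fun i => isSymm_diagonal (v i)) hunit
  simpa only [Pi.mul_def, levi_mul_levi, nonsing_inv_mul_cancel_right _ _ (hunit _)] using
    mul_mem (hSL _ hdet) hdiag

end CommRing

theorem eq_top_of_upperPart {F : ι → Type*} [∀ i, Field (F i)] [∀ i, Nonempty (l i)]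
    {H : Subgroup (∀ i, symplecticGroup (l i) (F i))}
    (hSL : ∀ A : ∀ i, Matrix (l i) (l i) (F i), (∀ i, (A i).det = 1) →
      (fun i => levi (A i)) ∈ matrixSubmonoid H)
    (hJ : (fun i => J (l i) (F i)) ∈ matrixSubmonoid H)
    (hU : ∀ X : ∀ i, Matrix (l i) (l i) (F i), (∀ i, (X i).IsSymm) → X ∈ upperPart H) :
    H = ⊤ := by
  refine (Subgroup.eq_top_iff' H).2 fun g => coe_mem_matrixSubmonoid.1 ?_
  choose X Y A Z hX hY hA hZ hg using fun i =>
    exists_eq_upper_mul_lower_mul_levi_mul_upper (g i).2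
  rw [funext hg]
  exact mul_mem (mul_mem (mul_mem (hU X hX) (lower_mem_matrixSubmonoid hJ (hU Y hY)))
    (levi_mem_matrixSubmonoid hSL hJ hU hA)) (hU Z hZ)

end Product

end SymplecticProduct

open SymplecticProduct in
theorem stmt_17_general {ι : Type*} (l : ι → Type*) [∀ i, Fintype (l i)] [∀ i, DecidableEq (l i)]
    (hl : ∀ i, 3 ≤ Fintype.card (l i)) (F : ι → Type*) [∀ i, Field (F i)]
    (hF : ∀ i, ringChar (F i) = 2 → ∀ r : F i, IsSquare r) :
    ∃ S : Finset (∀ i, symplecticGroup (l i) (F i)),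
      Subgroup.closure
        ({g : ∀ i, symplecticGroup (l i) (F i) | ∀ i, ∃ A : SpecialLinearGroup (l i) (F i),
            (g i : Matrix (l i ⊕ l i) (l i ⊕ l i) (F i)) =
              fromBlocks (A : Matrix (l i) (l i) (F i)) 0 0
                ((A⁻¹ : SpecialLinearGroup (l i) (F i)) : Matrix (l i) (l i) (F i))ᵀ}
          ∪ (S : Set (∀ i, symplecticGroup (l i) (F i)))) = ⊤ := by
  classical
  choose κ hκ using fun i => exists_coloring (hl i)
  have hne : ∀ i, Nonempty (l i) := fun i => Fintype.card_pos_iff.1 (by have := hl i; lia)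
  let u (ab : Fin 5 × Fin 5) : ∀ i, symplecticGroup (l i) (F i) := fun i =>
    ⟨upper (coordProj (F i) (colorsAvoiding (κ i) ab.1 ab.2)),
      upper_mem_symplecticGroup (isSymm_coordProj _)⟩
  refine ⟨insert (fun i => SymplecticGroup.symJ (l i) (F i)) (Finset.univ.image u), ?_⟩
  set H : Subgroup (∀ i, symplecticGroup (l i) (F i)) := Subgroup.closure _
  have hSL (A : ∀ i, Matrix (l i) (l i) (F i)) (hA : ∀ i, (A i).det = 1) :
      (fun i => levi (A i)) ∈ matrixSubmonoid H :=
    ⟨fun i => ⟨levi (A i), levi_mem_symplecticGroup (by simp [hA i])⟩,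
      Subgroup.subset_closure (.inl fun i => ⟨⟨A i, hA i⟩, levi_eq_of_det_eq_one (hA i)⟩), rfl⟩
  have hJ : (fun i => J (l i) (F i)) ∈ matrixSubmonoid H :=
    coe_mem_matrixSubmonoid (g := fun i => SymplecticGroup.symJ (l i) (F i)) |>.2
      (Subgroup.subset_closure (.inr (Finset.mem_insert_self _ _)))
  have hproj (a b : Fin 5) :
      (fun i => coordProj (F i) (colorsAvoiding (κ i) a b)) ∈ upperPart H :=
    coe_mem_matrixSubmonoid (g := u (a, b)) |>.2 (Subgroup.subset_closure
      (.inr (Finset.mem_insert_of_mem (Finset.mem_image_of_mem u (Finset.mem_univ (a, b))))))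
  exact eq_top_of_upperPart hSL hJ fun X hX =>
    (isCongrInvariant_upperPart hSL).mem_of_isSymm hκ hproj
      (fun i => exists_two_mul_add_sq (hF i)) hX

/-- `∏ n, Sp(2dₙ, Fₙ)` is finitely generated over the subgroup `∏ n, Gₙ`, where
`Gₙ = {diag(A, (A⁻¹)ᵀ) : A ∈ SL(dₙ, Fₙ)}` consists of the block-diagonal symplectic
matrices with blocks `A` and the inverse transpose of `A`. Here `dₙ ≥ 3` and the
symplectic group consists of the `2d × 2d` matrices `M` with `M J Mᵀ = J` for the
standard block form `J`. -/
theorem stmt_17 (d : ℕ → ℕ) (hd : ∀ n, 3 ≤ d n) (F : ℕ → Type*)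
    [∀ n, Field (F n)] [∀ n, Fintype (F n)] :
    ∃ S : Finset (∀ n, ↥(Matrix.symplecticGroup (Fin (d n)) (F n))),
      Subgroup.closure
        ({g : ∀ n, ↥(Matrix.symplecticGroup (Fin (d n)) (F n)) |
            ∀ n, ∃ A : Matrix.SpecialLinearGroup (Fin (d n)) (F n),
              (g n : Matrix (Fin (d n) ⊕ Fin (d n)) (Fin (d n) ⊕ Fin (d n)) (F n)) =
                Matrix.fromBlocks (A : Matrix (Fin (d n)) (Fin (d n)) (F n)) 0 0
                  (((A⁻¹ : Matrix.SpecialLinearGroup (Fin (d n)) (F n)) :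
                      Matrix (Fin (d n)) (Fin (d n)) (F n))ᵀ)}
          ∪ (S : Set (∀ n, ↥(Matrix.symplecticGroup (Fin (d n)) (F n))))) = ⊤ :=
  stmt_17_general (fun n => Fin (d n)) (by simpa using hd) F
    fun _ => FiniteField.isSquare_of_char_two
end

section
/- Let (d_n)_{n∈ℕ} be a sequence of integers with d_n ≥ 3 and (q_n)_{n∈ℕ} a sequence of prime powers, and suppose there does NOT exist an infinite subset I of ℕ and an integer d such that d_n = d for all n ∈ I and the q_n for n ∈ I are strictly increasing (i.e., q_n < q_m whenever n, m ∈ I and n < m). Then c(∏_{n∈ℕ} Sp(2d_n, GF(q_n))) > ω; that is, the full direct product of the symplectic groups Sp(2d_n, GF(q_n)) cannot be written as the union of a countable increasing chain of proper subgroups. -/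
/-!
Let `H` be a countable increasing chain of subgroups with union `G`. Given countably many subgroups
of `G`, each the normal closure of one of its elements and such that any family of inner
automorphisms of them is induced by a single element of `G`, a diagonal argument puts one of them
inside a term of `H`. This applies to products of symplectic groups of rank at least `3` acting on
disjoint sets of indices or on disjoint blocks of coordinates.

With disjoint sets of indices, it yields that every set of indices whose groups have bounded order
has its subproduct inside a term of `H`. By hypothesis this settles the indices of bounded rank.

With disjoint blocks of `⌊d / 2 ^ (j + 1)⌋` coordinates in rank `d`, for `j = 0, 1, …`, it yields a
`j` for which a term of `H` contains all families of upper unipotents supported on the `j`-th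
blocks. These form a fixed proportion of the coordinates, so boundedly many permutation matrices
move them over all entries, and a larger term of `H` contains all upper and lower unipotents. The
whole product is a bounded product of these: a symplectic matrix is a product of an upper unipotent,
a Levi element, a lower unipotent and an upper unipotent, and a Levi element is a bounded product of
unipotents since, by Frobenius, an invertible matrix is a product of two symmetric ones.
-/

namespace UncountableCofinality

section Cofinality

open Function Set

section Exhaustion

variable {G : Type*} [Group G]

/-- A countable increasing chain of subgroups whose union is the whole group. -/
structure IsExhaustion (H : ℕ → Subgroup G) : Prop where
  monotone : Monotone H
  exists_mem : ∀ g, ∃ t, g ∈ H t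

variable {H : ℕ → Subgroup G}

lemma IsExhaustion.exists_forall_mem (hH : IsExhaustion H) {κ : Type*} [Finite κ] (g : κ → G) :
    ∃ t, ∀ k, g k ∈ H t := by
  choose t ht using fun k => hH.exists_mem (g k)
  obtain ⟨T, hT⟩ := (finite_range t).bddAbove
  exact ⟨T, fun k => hH.monotone (hT (mem_range_self k)) (ht k)⟩

/- Diagonal argument: if `H (s j)` contains `φ j (z j)` but not the whole image of `φ j`, then some
`a j` fails to normalise the preimage of `H (s j)`; the element `b` inducing all the `a j` at once
then lies in no `H t`. -/
theorem IsExhaustion.exists_range_le (hH : IsExhaustion H) {N : ℕ → Type*} [∀ j, Group (N j)]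
    (φ : ∀ j, N j →* G) (z : ∀ j, N j) (hz : ∀ j, Subgroup.normalClosure {z j} = ⊤)
    (hconj : ∀ a : ∀ j, N j, ∃ b : G, ∀ j x, b * φ j x * b⁻¹ = φ j (a j * x * (a j)⁻¹)) :
    ∃ j t, (φ j).range ≤ H t := by
  by_contra! hnot
  choose s hs using fun j => hH.exists_mem (φ j (z j))
  have hnormalizer : ∀ j, ∃ a x, φ j x ∈ H (max j (s j)) ∧
      φ j (a * x * a⁻¹) ∉ H (max j (s j)) := by
    intro j
    by_contra! hnormal
    have : ((H (max j (s j))).comap (φ j)).Normal := ⟨fun x hx a => hnormal a x hx⟩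
    have htop : (H (max j (s j))).comap (φ j) = ⊤ := by
      rw [← top_le_iff, ← hz j, ← Subgroup.normalClosure_subset_iff, singleton_subset_iff]
      exact hH.monotone (le_max_right j (s j)) (hs j)
    exact hnot j _ (MonoidHom.range_eq_map (φ j) ▸ Subgroup.map_le_iff_le_comap.2 htop.ge)
  choose a x hx hax using hnormalizer
  obtain ⟨b, hb⟩ := hconj a
  obtain ⟨t, ht⟩ := hH.exists_mem b
  have hbt : b ∈ H (max t (s t)) := hH.monotone (le_max_left t (s t)) ht
  exact hax t (hb t (x t) ▸ mul_mem (mul_mem hbt (hx t)) (inv_mem hbt))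

end Exhaustion

section Conjugation

lemma exists_simultaneous_conj {J K : Type*} [Group K] {N : J → Type*} [∀ j, Group (N j)]
    (φ : ∀ j, N j →* K) (hcomm : Pairwise fun j j' => ∀ x y, Commute (φ j x) (φ j' y))
    (hfin : {j | φ j ≠ 1}.Finite) (a : ∀ j, N j) :
    ∃ b : K, ∀ j x, b * φ j x * b⁻¹ = φ j (a j * x * (a j)⁻¹) := by
  classical
  have hpair : (hfin.toFinset : Set J).Pairwise (Commute on fun j => φ j (a j)) :=
    fun j _ j' _ hne => hcomm hne _ _
  refine ⟨hfin.toFinset.noncommProd _ hpair, fun j x => ?_⟩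
  by_cases hj : φ j = 1
  · simp [hj]
  have hrest : Commute ((hfin.toFinset.erase j).noncommProd (fun j => φ j (a j))
      (hpair.mono (Finset.coe_subset.2 (Finset.erase_subset _ _)))) (φ j x) :=
    (Finset.noncommProd_commute _ _ _ _ fun j' hj' =>
      hcomm (Finset.ne_of_mem_erase hj').symm _ _).symm
  calc hfin.toFinset.noncommProd _ hpair * φ j x * (hfin.toFinset.noncommProd _ hpair)⁻¹
      = φ j (a j) * ((hfin.toFinset.erase j).noncommProd (fun j => φ j (a j)) _ * φ j x *
          ((hfin.toFinset.erase j).noncommProd (fun j => φ j (a j)) _)⁻¹) * (φ j (a j))⁻¹ := by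
        rw [← Finset.mul_noncommProd_erase _ (hfin.mem_toFinset.2 hj) _ hpair]
        group
    _ = φ j (a j * x * (a j)⁻¹) := by rw [hrest.mul_inv_cancel, map_mul, map_mul, map_inv]

lemma exists_simultaneous_conj_pi {J ι : Type*} {K : ι → Type*} [∀ i, Group (K i)]
    {N : J → Type*} [∀ j, Group (N j)] (φ : ∀ j i, N j →* K i)
    (hcomm : ∀ i, Pairwise fun j j' => ∀ x y, Commute (φ j i x) (φ j' i y))
    (hfin : ∀ i, {j | φ j i ≠ 1}.Finite) (a : ∀ j, N j) :
    ∃ b : ∀ i, K i, ∀ j x, b * MonoidHom.pi (φ j) x * b⁻¹ =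
      MonoidHom.pi (φ j) (a j * x * (a j)⁻¹) := by
  choose b hb using fun i => exists_simultaneous_conj (φ · i) (hcomm i) (hfin i) a
  exact ⟨b, fun j x => funext fun i => hb i j x⟩

end Conjugation

section Captured

variable {ι : Type*} {K : ι → Type*} [∀ i, Group (K i)]

/-- The subproduct of a direct product over the coordinates in `X`. -/
def subproduct (K : ι → Type*) [∀ i, Group (K i)] (X : Set ι) : Subgroup (∀ i, K i) :=
  Subgroup.pi Xᶜ fun _ => ⊥

lemma mem_subproduct {X : Set ι} {g : ∀ i, K i} : g ∈ subproduct K X ↔ ∀ i ∉ X, g i = 1 :=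
  Iff.rfl

lemma subproduct_mono {X Y : Set ι} (hXY : X ⊆ Y) : subproduct K X ≤ subproduct K Y :=
  fun _ hg i hi => hg i (notMem_subset hXY hi)

lemma piecewise_one_mem_subproduct (X : Set ι) [∀ i, Decidable (i ∈ X)] (g : ∀ i, K i) :
    X.piecewise g (1 : ∀ i, K i) ∈ subproduct K X :=
  fun _ hi => piecewise_eq_of_notMem X g _ hi

lemma subproduct_union_le (X Y : Set ι) :
    subproduct K (X ∪ Y) ≤ subproduct K X ⊔ subproduct K Y := by
  classical
  intro g hg
  have hY : X.piecewise (1 : ∀ i, K i) g ∈ subproduct K Y := mem_subproduct.2 fun i hi => by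
    by_cases hX : i ∈ X
    · rw [piecewise_eq_of_mem X _ _ hX, Pi.one_apply]
    · rw [piecewise_eq_of_notMem X _ _ hX]
      exact hg i (by simp [hX, hi])
  have hsplit : g = X.piecewise g (1 : ∀ i, K i) * X.piecewise (1 : ∀ i, K i) g := by
    rw [← piecewise_mul, mul_one, one_mul, piecewise_same]
  rw [hsplit]
  exact Subgroup.mul_mem_sup (piecewise_one_mem_subproduct X g) hY

/-- The subproduct over the coordinates in `X` is contained in a single term of the chain `H`. -/
def Captured (H : ℕ → Subgroup (∀ i, K i)) (X : Set ι) : Prop :=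
  ∃ t, subproduct K X ≤ H t

variable {H : ℕ → Subgroup (∀ i, K i)} {X Y : Set ι}

lemma Captured.subset (hY : Captured H Y) (hXY : X ⊆ Y) : Captured H X :=
  hY.imp fun _ ht => (subproduct_mono hXY).trans ht

lemma Captured.union (hH : Monotone H) (hX : Captured H X) (hY : Captured H Y) :
    Captured H (X ∪ Y) := by
  obtain ⟨s, hs⟩ := hX
  obtain ⟨t, ht⟩ := hY
  exact ⟨max s t, (subproduct_union_le X Y).trans
    (sup_le (hs.trans (hH (le_max_left s t))) (ht.trans (hH (le_max_right s t))))⟩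

lemma captured_empty : Captured H ∅ :=
  ⟨0, fun g hg => by
    rw [show g = 1 from funext fun i => hg i (notMem_empty i)]
    exact one_mem _⟩

lemma captured_biUnion (hH : Monotone H) {κ : Type*} {s : Set κ} (hs : s.Finite) {X : κ → Set ι}
    (hX : ∀ k ∈ s, Captured H (X k)) : Captured H (⋃ k ∈ s, X k) := by
  induction s, hs using Set.Finite.induction_on with
  | empty => simpa only [biUnion_empty] using captured_empty
  | insert _ _ ih =>
    rw [biUnion_insert]
    exact (hX _ (mem_insert _ _)).union hH (ih fun k hk => hX k (mem_insert_of_mem _ hk))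

lemma IsExhaustion.exists_captured_of_pairwise_disjoint (hH : IsExhaustion H) {z : ∀ i, K i}
    (hz : Subgroup.normalClosure {z} = ⊤) {X : ℕ → Set ι}
    (hX : Pairwise (Disjoint on X)) : ∃ j, Captured H (X j) := by
  classical
  let φ (j : ℕ) (i : ι) : (∀ i, K i) →* K i := if i ∈ X j then Pi.evalMonoidHom K i else 1
  have hcomm (i : ι) : Pairwise fun j j' => ∀ x y, Commute (φ j i x) (φ j' i y) := by
    intro j j' hne x y
    by_cases hi : i ∈ X j
    · simp [φ, disjoint_left.1 (hX hne) hi]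
    · simp [φ, hi]
  have hfin (i : ι) : {j | φ j i ≠ 1}.Finite := by
    refine Set.Subsingleton.finite fun j hj j' hj' => ?_
    by_contra hne
    have hi : i ∈ X j := by_contra fun hi => hj (if_neg hi)
    exact hj' (if_neg (disjoint_left.1 (hX hne) hi))
  obtain ⟨j, t, hjt⟩ := hH.exists_range_le (fun j => MonoidHom.pi (φ j)) (fun _ => z)
    (fun _ => hz) (exists_simultaneous_conj_pi φ hcomm hfin)
  refine ⟨j, t, fun g hg => hjt ⟨g, funext fun i => ?_⟩⟩
  by_cases hi : i ∈ X j
  · simp [φ, hi]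
  · simp [φ, hi, mem_subproduct.1 hg i hi]

/-- The captured subsets of `X` form a prime ideal of subsets: `X` itself is not captured, and of
two complementary subsets of `X` at least one is. -/
def IsPrimeFor (H : ℕ → Subgroup (∀ i, K i)) (X : Set ι) : Prop :=
  ¬ Captured H X ∧ ∀ Y ⊆ X, Captured H Y ∨ Captured H (X \ Y)

lemma IsExhaustion.exists_isPrimeFor_subset (hH : IsExhaustion H) {z : ∀ i, K i}
    (hz : Subgroup.normalClosure {z} = ⊤) {A : Set ι} (hA : ¬ Captured H A) :
    ∃ X ⊆ A, IsPrimeFor H X := by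
  have hwf : WellFounded fun Y X : Set ι => Y ⊆ X ∧ ¬ Captured H (X \ Y) := by
    refine wellFounded_iff_isEmpty_descending_chain.2 ⟨fun ⟨X, hX⟩ => ?_⟩
    have hanti : Antitone X := antitone_nat_of_succ_le fun n => (hX n).1
    obtain ⟨n, hn⟩ := hH.exists_captured_of_pairwise_disjoint hz
      (X := fun n => X n \ X (n + 1)) <| (pairwise_disjoint_on _).2 fun m n hmn =>
        disjoint_sdiff_left.mono_right (sdiff_subset.trans (hanti hmn))
    exact (hX n).2 hn
  obtain ⟨X, ⟨hXA, hX⟩, hmin⟩ := hwf.has_min {X | X ⊆ A ∧ ¬ Captured H X} ⟨A, subset_rfl, hA⟩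
  refine ⟨X, hXA, hX, fun Y hYX => ?_⟩
  by_contra! h
  exact hmin Y ⟨hYX.trans hXA, h.1⟩ ⟨hYX, h.2⟩

/- Otherwise there are disjoint captured subsets of `X` escaping every level, and neither the union
of the even ones nor the union of the odd ones is captured. -/
lemma IsPrimeFor.exists_forall_captured_le (hH : Monotone H) (hX : IsPrimeFor H X) :
    ∃ T, ∀ Y ⊆ X, Captured H Y → subproduct K Y ≤ H T := by
  by_contra! hescape
  have hstep : ∀ s : Finset (Set ι × ℕ), (∀ p ∈ s, Captured H p.1) →
      ∃ q : Set ι × ℕ, (Captured H q.1 ∧ q.1 ⊆ X ∧ ¬ subproduct K q.1 ≤ H q.2) ∧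
        ∀ p ∈ s, Disjoint p.1 q.1 ∧ p.2 < q.2 := by
    intro s hs
    obtain ⟨t, ht⟩ := captured_biUnion hH s.finite_toSet hs
    let n := max t (s.sup Prod.snd + 1)
    obtain ⟨Y, hYX, hY, hYn⟩ := hescape n
    refine ⟨⟨Y \ ⋃ p ∈ s, p.1, n⟩, ⟨hY.subset sdiff_subset, sdiff_subset.trans hYX, fun hle => ?_⟩,
      fun p hp => ⟨disjoint_sdiff_right.mono_left (subset_biUnion_of_mem (u := Prod.fst) hp),
        lt_max_of_lt_right (Nat.lt_succ_of_le (Finset.le_sup hp))⟩⟩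
    refine hYn ((subproduct_mono ?_).trans ((subproduct_union_le _ _).trans
      (sup_le hle (ht.trans (hH (le_max_left _ _))))))
    exact subset_sdiff_union _ _
  obtain ⟨Y, hY, hlt⟩ := exists_seq_of_forall_finset_exists _ _
    fun s hs => hstep s fun p hp => (hs p hp).1
  have hlevel (n : ℕ) : n ≤ (Y n).2 :=
    StrictMono.le_apply (f := fun n => (Y n).2) fun m n hmn => (hlt m n hmn).2
  have hdisj : Pairwise (Disjoint on fun n => (Y n).1) :=
    (pairwise_disjoint_on _).2 fun m n hmn => (hlt m n hmn).1
  have hbad {E : Set ι} (hE : ∀ t, ∃ n ≥ t, (Y n).1 ⊆ E) : ¬ Captured H E := by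
    rintro ⟨t, ht⟩
    obtain ⟨n, htn, hn⟩ := hE t
    exact (hY n).2.2 ((subproduct_mono hn).trans (ht.trans (hH (htn.trans (hlevel n)))))
  rcases hX.2 (⋃ n, (Y (2 * n)).1) (iUnion_subset fun n => (hY _).2.1) with heven | hodd
  · exact hbad (fun t => ⟨2 * t, by lia, subset_iUnion (fun n => (Y (2 * n)).1) t⟩) heven
  · refine hbad (fun t => ⟨2 * t + 1, by lia, subset_sdiff.2 ⟨(hY _).2.1, ?_⟩⟩) hodd
    exact disjoint_iUnion_right.2 fun n => hdisj (by lia)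

/- On a set `X` that is prime for `H`, every element agrees with one of the finitely many `r k` off
a captured subset. -/
theorem IsExhaustion.captured_of_finite_cover (hH : IsExhaustion H) {z : ∀ i, K i}
    (hz : Subgroup.normalClosure {z} = ⊤) {A : Set ι} {κ : Type*} [Finite κ]
    (r : κ → ∀ i, K i) (hr : ∀ i ∈ A, ∀ x, ∃ k, r k i = x) : Captured H A := by
  classical
  by_contra hA
  obtain ⟨X, hXA, hX⟩ := hH.exists_isPrimeFor_subset hz hA
  obtain ⟨T, hT⟩ := hX.exists_forall_captured_le hH.monotone
  obtain ⟨s, hs⟩ := hH.exists_forall_mem fun k => X.piecewise (r k) 1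
  refine hX.1 ⟨max T s, fun g hg => ?_⟩
  let Q (k : κ) : Set ι := {i ∈ X | r k i = g i}
  obtain ⟨k, hk⟩ : ∃ k, ¬ Captured H (Q k) := by
    by_contra! h
    refine hX.1 ((captured_biUnion hH.monotone finite_univ fun k _ => h k).subset fun i hi => ?_)
    obtain ⟨k, hk⟩ := hr i (hXA hi) (g i)
    exact mem_biUnion (mem_univ k) ⟨hi, hk⟩
  have hdiff : g * (X.piecewise (r k) 1)⁻¹ ∈ subproduct K (X \ Q k) := fun i hi => by
    by_cases hiX : i ∈ X
    · have hik : r k i = g i := by_contra fun h => hi ⟨hiX, fun hq => h hq.2⟩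
      simp [hiX, hik]
    · simp [hiX, mem_subproduct.1 hg i hiX]
  have hcapt : Captured H (X \ Q k) := (hX.2 (Q k) (sep_subset X _)).resolve_left hk
  rw [← inv_mul_cancel_right g (X.piecewise (r k) 1)]
  exact mul_mem (hH.monotone (le_max_left T s) (hT _ sdiff_subset hcapt hdiff))
    (hH.monotone (le_max_right T s) (hs k))

lemma IsExhaustion.captured_of_natCard_le (hH : IsExhaustion H) {z : ∀ i, K i}
    (hz : Subgroup.normalClosure {z} = ⊤) [∀ i, Finite (K i)] {A : Set ι} {n : ℕ}
    (hA : ∀ i ∈ A, Nat.card (K i) ≤ n) : Captured H A := by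
  have hcover (i : ι) : ∃ r : Fin n → K i, i ∈ A → Surjective r := by
    by_cases hi : i ∈ A
    · let e := (Finite.equivFin (K i)).toEmbedding.trans (Fin.castLEEmb (hA i hi))
      exact ⟨invFun e, fun _ => invFun_surjective e.injective⟩
    · exact ⟨1, fun h => absurd h hi⟩
  choose r hr using hcover
  exact hH.captured_of_finite_cover hz (fun k i => r i k) fun i hi => hr i hi

end Captured

end Cofinality

section LinearAlgebra

open Matrix

section Frobenius

open Polynomial

universe u

variable {F : Type u} [Field F]

lemma coeff_mul_X_pow_modByMonic_ne_zero {g q : F[X]} (hg : g.Monic) (hq : q ≠ 0)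
    (hqg : q.degree < g.degree) :
    ((q * X ^ (g.natDegree - 1 - q.natDegree)) %ₘ g).coeff (g.natDegree - 1) ≠ 0 := by
  have hlt : q.natDegree < g.natDegree := natDegree_lt_natDegree hq hqg
  have hdeg : (q * X ^ (g.natDegree - 1 - q.natDegree)).degree < g.degree := by
    rw [degree_mul, degree_X_pow, degree_eq_natDegree hq, degree_eq_natDegree hg.ne_zero]
    exact_mod_cast (by lia : q.natDegree + (g.natDegree - 1 - q.natDegree) < g.natDegree)
  rw [(modByMonic_eq_self_iff hg).2 hdeg, coeff_mul_X_pow', if_pos (by lia),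
    show g.natDegree - 1 - (g.natDegree - 1 - q.natDegree) = q.natDegree by lia]
  exact leadingCoeff_ne_zero.2 hq

/- The functional is the coefficient of `X ^ (deg g - 1)` in the remainder modulo the monic
generator `g` of the ideal. -/
lemma exists_functional_forall_mul_eq_zero_imp_eq_zero {I : Ideal F[X]} (hI : I ≠ ⊥) :
    ∃ f : (F[X] ⧸ I) →ₗ[F] F, ∀ a, (∀ b, f (a * b) = 0) → a = 0 := by
  obtain ⟨g, hg, rfl⟩ : ∃ g : F[X], g.Monic ∧ I = Ideal.span {g} := by
    obtain ⟨g, rfl⟩ := (IsPrincipalIdealRing.principal I).principal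
    have hg : g ≠ 0 := by simpa using hI
    exact ⟨g * C g.leadingCoeff⁻¹, monic_mul_leadingCoeff_inv hg,
      (Ideal.span_singleton_mul_right_unit (isUnit_C.2 (by simpa using hg)) g).symm⟩
  refine ⟨lcoeff F (g.natDegree - 1) ∘ₗ AdjoinRoot.modByMonicHom hg, fun a ha => ?_⟩
  obtain ⟨p, rfl⟩ := AdjoinRoot.mk_surjective (g := g) a
  change AdjoinRoot.mk g p = 0
  have hpg : AdjoinRoot.mk g p = AdjoinRoot.mk g (p %ₘ g) := by
    rw [AdjoinRoot.mk_eq_mk, modByMonic_eq_sub_mul_div, sub_sub_cancel]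
    exact dvd_mul_right _ _
  by_contra hne
  have hq : p %ₘ g ≠ 0 := fun h => hne (by rw [hpg, h, map_zero])
  refine coeff_mul_X_pow_modByMonic_ne_zero hg hq (degree_modByMonic_lt p hg) ?_
  have hcoeff : (AdjoinRoot.modByMonicHom hg (AdjoinRoot.mk g p * AdjoinRoot.mk g
      (X ^ (g.natDegree - 1 - (p %ₘ g).natDegree)))).coeff (g.natDegree - 1) = 0 := ha _
  rwa [hpg, ← map_mul, AdjoinRoot.modByMonicHom_mk] at hcoeff

section Endomorphism

variable {V : Type*} [AddCommGroup V] [Module F V] [FiniteDimensional F V]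

lemma exists_cyclic_decomposition (φ : V →ₗ[F] V) :
    ∃ (ι : Type u) (_ : Fintype ι) (I : ι → Ideal F[X]) (e : V ≃ₗ[F] ∀ i, F[X] ⧸ I i),
      (∀ i, I i ≠ ⊥) ∧ ∀ x i, e (φ x) i = Ideal.Quotient.mk (I i) X * e x i := by
  classical
  obtain ⟨ι, _, p, hp, k, ⟨E⟩⟩ := Module.equiv_directSum_of_isTorsion
    (R := F[X]) (M := Module.AEval' φ) (Module.AEval.isTorsion_of_finiteDimensional F _ φ)
  let I (i : ι) : Ideal F[X] := Submodule.span F[X] {p i ^ k i}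
  let E' : Module.AEval' φ ≃ₗ[F[X]] ∀ i, F[X] ⧸ I i :=
    E.trans (DirectSum.linearEquivFunOnFintype F[X] ι fun i => F[X] ⧸ I i)
  refine ⟨ι, inferInstance, I, (Module.AEval'.of φ).trans (E'.restrictScalars F),
    fun i h => pow_ne_zero (k i) (hp i).ne_zero (Ideal.span_singleton_eq_bot.1 h), fun x i => ?_⟩
  change E' (Module.AEval'.of φ (φ x)) i = _
  rw [← Module.AEval'.X_smul_of, map_smul]
  rfl

theorem exists_isSymm_nondegenerate_selfAdjoint (φ : V →ₗ[F] V) :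
    ∃ B : LinearMap.BilinForm F V, B.IsSymm ∧ B.Nondegenerate ∧ ∀ x y, B (φ x) y = B x (φ y) := by
  classical
  obtain ⟨ι, _, I, e, hI, he⟩ := exists_cyclic_decomposition φ
  choose f hf using fun i => exists_functional_forall_mul_eq_zero_imp_eq_zero (hI i)
  let c (i : ι) : V →ₗ[F] F[X] ⧸ I i := LinearMap.proj i ∘ₗ e.toLinearMap
  let B : LinearMap.BilinForm F V := ∑ i, ((LinearMap.mul F _).compr₂ (f i)).compl₁₂ (c i) (c i)
  have hB (x y : V) : B x y = ∑ i, f i (e x i * e y i) := by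
    simp only [B, LinearMap.sum_apply]
    rfl
  have hsymm : B.IsSymm := ⟨fun x y => by simp [hB, mul_comm]⟩
  have hsep : B.SeparatingLeft := by
    intro x hx
    suffices e x = 0 by simpa using this
    refine funext fun i => hf i _ fun b => ?_
    have hxy := hx (e.symm (Pi.single i b))
    rwa [hB, Finset.sum_eq_single i (fun j _ hj => by simp [hj]) (by simp),
      e.apply_symm_apply, Pi.single_eq_same] at hxy
  refine ⟨B, hsymm, hsymm.isRefl.nondegenerate_iff_separatingLeft.2 hsep, fun x y => ?_⟩
  simp only [hB, he, mul_left_comm, mul_assoc]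

end Endomorphism

theorem exists_isSymm_isUnit_mul_isSymm {n : Type*} [Fintype n] [DecidableEq n]
    (A : Matrix n n F) : ∃ S : Matrix n n F, S.IsSymm ∧ IsUnit S ∧ (S * A).IsSymm := by
  obtain ⟨B, hsymm, hB, hA⟩ := exists_isSymm_nondegenerate_selfAdjoint (Matrix.toLin' A)
  refine ⟨B.toMatrix', LinearMap.BilinForm.isSymm_toMatrix'_iff_isSymm.2 hsymm, ?_, ?_⟩
  · rw [isUnit_iff_isUnit_det, isUnit_iff_ne_zero]
    exact LinearMap.BilinForm.nondegenerate_iff_det_ne_zero (Pi.basisFun F n) |>.1 hB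
  · have hcomp : (B.compRight (Matrix.toLin' A)).IsSymm :=
      ⟨fun x y => (hsymm.eq x (Matrix.toLin' A y)).trans (hA y x)⟩
    rwa [← LinearMap.BilinForm.isSymm_toMatrix'_iff_isSymm, LinearMap.BilinForm.toMatrix'_compRight,
      LinearMap.toMatrix'_toLin'] at hcomp

end Frobenius

section Rank

/- With `Pᵀ * A = N * Q` and `N` symmetric, `X = P'ᵀ * (1 - N) * P'` works. -/
lemma exists_isSymm_transpose_mul_add_mul_eq {k n R : Type*} [Fintype k] [DecidableEq k] [Fintype n]
    [CommRing R] {A : Matrix n n R} {P Q' : Matrix n k R} {Q P' : Matrix k n R}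
    (hA : Aᵀ * (P * Q) = (P * Q)ᵀ * A) (hP : P' * P = 1) (hQ : Q * Q' = 1) :
    ∃ X : Matrix n n R, X.IsSymm ∧ Pᵀ * (A + X * (P * Q)) = Q := by
  have hPt : Pᵀ * P'ᵀ = 1 := by rw [← transpose_mul, hP, transpose_one]
  have hQt : Q'ᵀ * Qᵀ = 1 := by rw [← transpose_mul, hQ, transpose_one]
  let N := Pᵀ * A * Q'
  have hAP : Aᵀ * P = Qᵀ * N := by
    calc Aᵀ * P = Aᵀ * (P * Q) * Q' := by simp only [Matrix.mul_assoc, hQ, Matrix.mul_one]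
      _ = Qᵀ * N := by rw [hA, transpose_mul]; simp only [N, Matrix.mul_assoc]
  have hN : Nᵀ = N := by
    rw [transpose_mul, transpose_mul, transpose_transpose, hAP, ← Matrix.mul_assoc, hQt,
      Matrix.one_mul]
  have hNQ : Pᵀ * A = N * Q := by
    rw [← hN, ← transpose_transpose (Pᵀ * A), transpose_mul, transpose_transpose, hAP,
      transpose_mul, transpose_transpose]
  refine ⟨P'ᵀ * (1 - N) * P', ?_, ?_⟩
  · rw [IsSymm, transpose_mul, transpose_mul, transpose_transpose, transpose_sub, transpose_one, hN,
      Matrix.mul_assoc]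
  · calc Pᵀ * (A + P'ᵀ * (1 - N) * P' * (P * Q))
        = Pᵀ * A + (Pᵀ * P'ᵀ) * (1 - N) * (P' * P) * Q := by
          simp only [Matrix.mul_add, Matrix.mul_assoc]
      _ = Q := by rw [hPt, hP, hNQ, Matrix.one_mul, Matrix.mul_one, Matrix.sub_mul, Matrix.one_mul,
          add_sub_cancel]

variable {F n : Type*} [Field F] [Fintype n]

lemma exists_rank_factorization (C : Matrix n n F) :
    ∃ (r : ℕ) (P : Matrix n (Fin r) F) (Q : Matrix (Fin r) n F) (P' : Matrix (Fin r) n F)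
      (Q' : Matrix n (Fin r) F), C = P * Q ∧ P' * P = 1 ∧ Q * Q' = 1 := by
  classical
  obtain ⟨V, U, e, hV, hU, h⟩ := C.exists_rank_normal_form
  obtain ⟨V, rfl⟩ := hV
  obtain ⟨U, rfl⟩ := hU
  let E : Matrix n (Fin C.rank) F := (fromRows 1 0).submatrix e id
  have hE : Eᵀ * E = 1 := by
    rw [transpose_submatrix, submatrix_mul_equiv, transpose_fromRows, fromCols_mul_fromRows]
    simp
  have hEE : E * Eᵀ = (fromBlocks 1 0 0 0).submatrix e e := by
    rw [transpose_submatrix, transpose_fromRows,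
      submatrix_mul _ _ e id e Function.bijective_id |>.symm, fromRows_mul_fromCols]
    simp
  have hC : V.1 * C * U.1 = E * Eᵀ := h.trans hEE.symm
  refine ⟨C.rank, (V⁻¹).1 * E, Eᵀ * (U⁻¹).1, Eᵀ * V.1, U.1 * E, ?_, ?_, ?_⟩
  · calc C = (V⁻¹).1 * (V.1 * C * U.1) * (U⁻¹).1 := by simp [Matrix.mul_assoc]
      _ = (V⁻¹).1 * E * (Eᵀ * (U⁻¹).1) := by rw [hC]; simp only [Matrix.mul_assoc]
  · rw [Matrix.mul_assoc, ← Matrix.mul_assoc V.1, V.mul_inv, Matrix.one_mul, hE]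
  · rw [Matrix.mul_assoc, ← Matrix.mul_assoc (U⁻¹).1, U.inv_mul, Matrix.one_mul, hE]

lemma exists_isSymm_isUnit_add_mul [DecidableEq n] {A C : Matrix n n F} (hAC : Aᵀ * C = Cᵀ * A)
    (hker : ∀ x, A *ᵥ x = 0 → C *ᵥ x = 0 → x = 0) :
    ∃ X : Matrix n n F, X.IsSymm ∧ IsUnit (A + X * C) := by
  obtain ⟨r, P, Q, P', Q', rfl, hP, hQ⟩ := exists_rank_factorization C
  obtain ⟨X, hX, hPX⟩ := exists_isSymm_transpose_mul_add_mul_eq hAC hP hQ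
  refine ⟨X, hX, ?_⟩
  rw [← mulVec_injective_iff_isUnit, ← coe_mulVecLin, ← LinearMap.ker_eq_bot,
    ker_mulVecLin_eq_bot_iff]
  intro x hx
  have hQx : Q *ᵥ x = 0 := by rw [← hPX, ← mulVec_mulVec, hx, mulVec_zero]
  have hCx : (P * Q) *ᵥ x = 0 := by rw [← mulVec_mulVec, hQx, mulVec_zero]
  refine hker x ?_ hCx
  rwa [add_mulVec, ← mulVec_mulVec _ _ (P * Q), hCx, mulVec_zero, add_zero] at hx

end Rank

section Trinomial

variable {S : Type*} [Ring S] {A C X : S} {d k : ℕ}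

lemma isUnit_of_pow_eq_pow_add_one (hk : 0 < k) (hkd : k < d) (hA : A ^ d = A ^ k + 1) :
    IsUnit A := by
  have hunit : A ^ k * (A ^ (d - k) - 1) = 1 := by
    rw [mul_sub, mul_one, ← pow_add, Nat.add_sub_of_le hkd.le, hA, add_sub_cancel_left]
  have hcomm : Commute (A ^ k) (A ^ (d - k) - 1) :=
    (Commute.pow_pow_self A _ _).sub_right (Commute.one_right _)
  exact (isUnit_pow_iff hk.ne').1 (isUnit_iff_exists.2 ⟨_, hunit, hcomm.eq ▸ hunit⟩)

lemma pow_mul_mul_pow_eq_self (hX : A * X * C = X) (n : ℕ) : A ^ n * X * C ^ n = X := by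
  induction n with
  | zero => simp
  | succ n ih =>
    calc A ^ (n + 1) * X * C ^ (n + 1) = A ^ n * (A * X * C) * C ^ n := by
          simp only [pow_succ A, pow_succ' C, mul_assoc]
      _ = X := by rw [hX, ih]

lemma mul_pow_sq_add_mul_pow_add_self (hX : A * X * C = X) (hA : A ^ d = A ^ k + 1)
    (hC : C ^ d = C ^ k + 1) : X * (C ^ k) ^ 2 + X * C ^ k + X = 0 := by
  have hk := pow_mul_mul_pow_eq_self hX k
  have hd := pow_mul_mul_pow_eq_self hX d
  rw [hA, hC] at hd
  have hsum : A ^ k * X + X * C ^ k + X = 0 := by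
    calc A ^ k * X + X * C ^ k + X = (A ^ k + 1) * X * (C ^ k + 1) - A ^ k * X * C ^ k := by
          noncomm_ring
      _ = 0 := by rw [hd, hk, sub_self]
  calc X * (C ^ k) ^ 2 + X * C ^ k + X = (A ^ k * X + X * C ^ k + X) * C ^ k := by
        rw [add_mul, add_mul, hk, sq, mul_assoc]
        abel
    _ = 0 := by rw [hsum, zero_mul]

lemma mul_pow_three_mul_eq_self (hX : X * C ^ 2 + X * C + X = 0) (n : ℕ) :
    X * C ^ (3 * n) = X := by
  have hcube : X * C ^ 3 = X := sub_eq_zero.1 <| by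
    calc X * C ^ 3 - X = (X * C ^ 2 + X * C + X) * (C - 1) := by noncomm_ring
      _ = 0 := by rw [hX, zero_mul]
  induction n with
  | zero => simp
  | succ n ih => rw [Nat.mul_succ, pow_add, ← mul_assoc, ih, hcube]

lemma eq_zero_of_mul_mul_eq_self_of_dvd {e : ℕ} (hX : A * X * C = X) (hA : A ^ (3 * e) = A + 1)
    (hC : C ^ (3 * e) = C + 1) : X = 0 := by
  have hsq : X * C ^ 2 + X * C + X = 0 := by
    simpa only [pow_one] using mul_pow_sq_add_mul_pow_add_self (d := 3 * e) (k := 1) hX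
      (by rwa [pow_one]) (by rwa [pow_one])
  have hXC : X * C = 0 := by
    simpa [hC, mul_add] using mul_pow_three_mul_eq_self hsq e
  simpa [sq, ← mul_assoc, hXC] using hsq

lemma eq_zero_of_mul_mul_eq_self_of_not_dvd (hd : ¬ 3 ∣ d) (hX : A * X * C = X)
    (hA : A ^ d = A ^ 3 + 1) (hC : C ^ d = C ^ 3 + 1) : X = 0 := by
  have hsq := mul_pow_sq_add_mul_pow_add_self hX hA hC
  have hcube := mul_pow_three_mul_eq_self hsq
  set D := C ^ 3 with hD
  have hDd : D ^ d = (D + 1) ^ 3 := by rw [← hC, ← pow_mul, ← pow_mul, mul_comm]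
  have hneg : X * D ^ d = -X := by
    rw [hDd, eq_neg_iff_add_eq_zero]
    calc X * (D + 1) ^ 3 + X = (X * D ^ 2 + X * D + X) * (D + 2) := by noncomm_ring
      _ = 0 := by rw [hsq, zero_mul]
  obtain ⟨e, rfl | rfl⟩ : ∃ e, d = 3 * e + 1 ∨ d = 3 * e + 2 := ⟨d / 3, by lia⟩
  · have hXD : X * D = -X := by rwa [pow_succ, ← mul_assoc, hcube] at hneg
    simpa [sq, ← mul_assoc, hXD] using hsq
  · have hXD : X * D ^ 2 = -X := by rwa [pow_add, ← mul_assoc, hcube] at hneg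
    have hXD' : X * D = 0 := by
      rwa [hXD, add_right_comm, neg_add_cancel, zero_add] at hsq
    simpa [sq, ← mul_assoc, hXD'] using hXD.symm

end Trinomial

section CongruenceFixedPoints

open Polynomial

variable {F l : Type*} [Field F] [Fintype l]

lemma exists_matrix_aeval_eq_zero [DecidableEq l] {f : F[X]} (hf : f.Monic)
    (hdeg : f.natDegree = Fintype.card l) :
    ∃ A : Matrix l l F, aeval A f = 0 := by
  let b : Module.Basis l F (AdjoinRoot f) :=
    (AdjoinRoot.powerBasis' hf).basis.reindex (Fintype.equivFinOfCardEq hdeg.symm).symm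
  refine ⟨Algebra.leftMulMatrix b (AdjoinRoot.root f), ?_⟩
  rw [aeval_algHom_apply, AdjoinRoot.aeval_eq, AdjoinRoot.mk_self, map_zero]

lemma exists_pow_card_eq_pow_add_one [DecidableEq l] {k : ℕ} (hk : k < Fintype.card l) :
    ∃ A : Matrix l l F, A ^ Fintype.card l = A ^ k + 1 := by
  have hlt : (X ^ k + 1 : F[X]).natDegree < Fintype.card l := by
    rwa [← C_1, natDegree_X_pow_add_C]
  obtain ⟨A, hA⟩ := exists_matrix_aeval_eq_zero (l := l)
    (monic_X_pow_sub (degree_le_natDegree.trans_lt (Nat.cast_lt.2 hlt)))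
    ((natDegree_sub_eq_left_of_natDegree_lt (by rwa [natDegree_X_pow])).trans (natDegree_X_pow _))
  exact ⟨A, by simpa [sub_eq_zero] using hA⟩

/- The eigenvalues of `A` are roots of `X ^ d - X ^ k - 1` with `k = 1` if `3 ∣ d` and `k = 3`
otherwise: if two roots have product `1`, their `k`-th powers are roots of `X ^ 2 + X + 1`, which
this choice of `k` excludes. -/
lemma exists_isUnit_forall_mul_mul_transpose_eq_self [DecidableEq l] (hl : 3 ≤ Fintype.card l) :
    ∃ A : (Matrix l l F)ˣ, ∀ X : Matrix l l F, A.1 * X * A.1ᵀ = X → X = 0 := by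
  have htranspose {A : Matrix l l F} {k : ℕ} (hA : A ^ Fintype.card l = A ^ k + 1) :
      Aᵀ ^ Fintype.card l = Aᵀ ^ k + 1 := by
    rw [← transpose_pow, hA, transpose_add, transpose_pow, transpose_one]
  by_cases hdvd : 3 ∣ Fintype.card l
  · obtain ⟨e, he⟩ := hdvd
    obtain ⟨A, hA⟩ := exists_pow_card_eq_pow_add_one (F := F) (l := l) (k := 1) (by lia)
    refine ⟨(isUnit_of_pow_eq_pow_add_one one_pos (by lia) hA).unit, fun X hX => ?_⟩
    have hAt := htranspose hA
    rw [he, pow_one] at hA hAt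
    exact eq_zero_of_mul_mul_eq_self_of_dvd hX hA hAt
  · have hlt : 3 < Fintype.card l := lt_of_le_of_ne hl (by rintro h; simp [← h] at hdvd)
    obtain ⟨A, hA⟩ := exists_pow_card_eq_pow_add_one (F := F) hlt
    exact ⟨(isUnit_of_pow_eq_pow_add_one three_pos hlt hA).unit,
      fun X hX => eq_zero_of_mul_mul_eq_self_of_not_dvd hdvd hX hA (htranspose hA)⟩

lemma exists_isSymm_mul_mul_transpose_sub_eq {A : Matrix l l F}
    (hA : ∀ X : Matrix l l F, A * X * Aᵀ = X → X = 0) {Z : Matrix l l F} (hZ : Z.IsSymm) :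
    ∃ Y : Matrix l l F, Y.IsSymm ∧ A * Y * Aᵀ - Y = Z := by
  let f : Matrix l l F →ₗ[F] Matrix l l F :=
    LinearMap.mulLeft F A ∘ₗ LinearMap.mulRight F Aᵀ - LinearMap.id
  have hf (X : Matrix l l F) : f X = A * X * Aᵀ - X := by simp [f, Matrix.mul_assoc]
  have hinj : Function.Injective f := (injective_iff_map_eq_zero f).2 fun X hX =>
    hA X (sub_eq_zero.1 ((hf X).symm.trans hX))
  obtain ⟨Y, hY⟩ := LinearMap.surjective_of_injective hinj Z
  have hYt : f Yᵀ = Z := by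
    rw [← hZ.eq, ← hY, hf, hf, transpose_sub, transpose_mul, transpose_mul, transpose_transpose,
      Matrix.mul_assoc]
  exact ⟨Y, hinj (hYt.trans hY.symm), (hf Y).symm.trans hY⟩

end CongruenceFixedPoints

end LinearAlgebra

section SymplecticGroups

open Matrix

section SymmetricMatrices

variable {k l R : Type*} [CommRing R]

/-- The additive group of symmetric matrices; it parametrises the unipotent radicals of the two
opposite Siegel parabolic subgroups of the symplectic group. -/
def symmMatrix (l R : Type*) [CommRing R] : AddSubgroup (Matrix l l R) where
  carrier := {X | X.IsSymm}
  add_mem' := IsSymm.add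
  zero_mem' := isSymm_zero
  neg_mem' := IsSymm.neg

/-- The congruence `X ↦ P X Pᵀ` of symmetric matrices. -/
def symmMatrix.congruence [Fintype k] (P : Matrix l k R) (X : symmMatrix k R) : symmMatrix l R :=
  ⟨P * X.1 * Pᵀ, by
    change (P * X.1 * Pᵀ).IsSymm
    rw [IsSymm, transpose_mul, transpose_mul, transpose_transpose, X.2.eq, Matrix.mul_assoc]⟩

lemma isSymm_inv_of_isSymm [Fintype l] [DecidableEq l] {S : (Matrix l l R)ˣ} (hS : S.1.IsSymm) :
    (S⁻¹).1.IsSymm := by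
  rw [coe_units_inv, IsSymm, transpose_nonsing_inv, hS.eq]

lemma transpose_mul_transpose_inv [Fintype l] [DecidableEq l] (A : (Matrix l l R)ˣ) :
    A.1ᵀ * (A⁻¹).1ᵀ = 1 := by
  rw [← transpose_mul, Units.inv_mul, transpose_one]

end SymmetricMatrices

section Unipotent

variable {l R : Type*} [Fintype l] [DecidableEq l] [CommRing R]

/-- The upper unipotent symplectic matrix with off-diagonal block `X`. -/
def upper (X : symmMatrix l R) : symplecticGroup l R :=
  ⟨fromBlocks 1 X.1 0 1, SymplecticGroup.fromBlocks_mem_iff.2 <| by simp [X.2.eq]⟩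

/-- The lower unipotent symplectic matrix with off-diagonal block `X`. -/
def lower (X : symmMatrix l R) : symplecticGroup l R :=
  ⟨fromBlocks 1 0 X.1 1, SymplecticGroup.fromBlocks_mem_iff.2 <| by simp [X.2.eq]⟩

/-- The embedding of the general linear group as the Levi subgroup of the Siegel parabolic. -/
def levi : (Matrix l l R)ˣ →* symplecticGroup l R where
  toFun A := ⟨fromBlocks A.1 0 0 (A⁻¹).1ᵀ, SymplecticGroup.fromBlocks_mem_iff.2 <| by
    simp [transpose_mul_transpose_inv, -coe_units_inv]⟩
  map_one' := Subtype.ext <| by simp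
  map_mul' A B := Subtype.ext <| by simp [fromBlocks_multiply]

lemma coe_levi (A : (Matrix l l R)ˣ) : (levi A).1 = fromBlocks A.1 0 0 (A⁻¹).1ᵀ := rfl

lemma upper_zero : upper (0 : symmMatrix l R) = 1 :=
  Subtype.ext <| by simp [upper]

lemma upper_add (X Y : symmMatrix l R) : upper (X + Y) = upper X * upper Y :=
  Subtype.ext <| by simp [upper, fromBlocks_multiply, add_comm]

lemma upper_neg (X : symmMatrix l R) : upper (-X) = (upper X)⁻¹ :=
  eq_inv_of_mul_eq_one_left <| by rw [← upper_add, neg_add_cancel, upper_zero]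

lemma lower_eq_symJ_conj_upper_inv (X : symmMatrix l R) :
    lower X =
      SymplecticGroup.symJ l R * (upper X)⁻¹ * (SymplecticGroup.symJ l R)⁻¹ := by
  rw [eq_mul_inv_iff_mul_eq, ← upper_neg]
  exact Subtype.ext <| by simp [upper, lower, fromBlocks_multiply, J]

lemma levi_conj_upper (A : (Matrix l l R)ˣ) (X : symmMatrix l R) :
    levi A * upper X * (levi A)⁻¹ = upper (symmMatrix.congruence A.1 X) := by
  rw [mul_inv_eq_iff_eq_mul]
  refine Subtype.ext ?_
  simp [upper, coe_levi, symmMatrix.congruence, fromBlocks_multiply, Matrix.mul_assoc,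
    transpose_mul_transpose_inv, -coe_units_inv]

/- The product of the first three factors is the Weyl element with blocks `S` and `-S⁻¹`; the last
three factors are those of the inverse of the Weyl element for `S = 1`. -/
lemma levi_eq_of_isSymm (S : (Matrix l l R)ˣ) (hS : S.1.IsSymm) :
    levi S = upper ⟨S.1, hS⟩ * lower (-⟨(S⁻¹).1, isSymm_inv_of_isSymm hS⟩) * upper ⟨S.1, hS⟩ *
      (upper (-⟨1, isSymm_one⟩) * lower ⟨1, isSymm_one⟩ * upper (-⟨1, isSymm_one⟩)) := by
  refine Subtype.ext ?_
  simp [upper, lower, coe_levi, fromBlocks_multiply, (isSymm_inv_of_isSymm hS).eq, -coe_units_inv]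

lemma exists_eq_lower_mul_upper {g : symplecticGroup l R} (hg : g.1.toBlocks₁₁ = 1) :
    ∃ Y Z, g = lower Y * upper Z := by
  obtain ⟨B, C, D, hBCD⟩ : ∃ B C D, g.1 = fromBlocks 1 B C D :=
    ⟨_, _, _, hg ▸ (fromBlocks_toBlocks g.1).symm⟩
  obtain ⟨hC, hBD, hD⟩ := SymplecticGroup.fromBlocks_mem_iff.1 (hBCD ▸ g.2)
  replace hC : Cᵀ = C := by simpa using hC.symm
  replace hD : D = 1 + C * B := by simpa [hC, sub_eq_iff_eq_add] using hD
  have hB : Bᵀ = B := by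
    simpa [hD, Matrix.mul_add, Matrix.add_mul, hC, Matrix.mul_assoc] using hBD
  refine ⟨⟨C, hC⟩, ⟨B, hB⟩, Subtype.ext ?_⟩
  simp [hBCD, hD, upper, lower, fromBlocks_multiply, add_comm]

end Unipotent

section Decomposition

variable {l F : Type*} [Fintype l] [DecidableEq l] [Field F]

lemma exists_isUnit_toBlocks₁₁_upper_mul (g : symplecticGroup l F) :
    ∃ X, IsUnit (upper X * g).1.toBlocks₁₁ := by
  obtain ⟨A, B, C, D, hg⟩ : ∃ A B C D, g.1 = fromBlocks A B C D :=
    ⟨_, _, _, _, (fromBlocks_toBlocks g.1).symm⟩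
  have hinj : Function.Injective g.1.mulVec := mulVec_injective_iff_isUnit.2 <|
    (isUnit_iff_isUnit_det _).2 (SymplecticGroup.symplectic_det g.2)
  obtain ⟨X, hX, hunit⟩ := exists_isSymm_isUnit_add_mul
    (SymplecticGroup.fromBlocks_mem_iff.1 (hg ▸ g.2)).1 fun x hA hC =>
      (Sum.elim_eq_iff.1 (@hinj (Sum.elim x 0) (Sum.elim 0 0) (by
        simp [hg, fromBlocks_mulVec, hA, hC]))).1
  exact ⟨⟨X, hX⟩, by simpa [upper, hg, fromBlocks_multiply] using hunit⟩

theorem exists_eq_upper_mul_levi_mul_lower_mul_upper (g : symplecticGroup l F) :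
    ∃ X A Y Z, g = upper X * levi A * lower Y * upper Z := by
  obtain ⟨X, A, hA⟩ := exists_isUnit_toBlocks₁₁_upper_mul g
  have hone : (levi A⁻¹ * (upper X * g)).1.toBlocks₁₁ = 1 := by
    rw [Submonoid.coe_mul, coe_levi, ← fromBlocks_toBlocks (upper X * g).1, fromBlocks_multiply,
      toBlocks_fromBlocks₁₁, ← hA, Units.inv_mul, Matrix.zero_mul, add_zero]
  obtain ⟨Y, Z, hYZ⟩ := exists_eq_lower_mul_upper hone
  refine ⟨-X, A, Y, Z, ?_⟩
  rw [mul_assoc, ← hYZ, map_inv, upper_neg]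
  group

lemma exists_isSymm_mul_isSymm_eq (A : (Matrix l l F)ˣ) :
    ∃ S T : (Matrix l l F)ˣ, S.1.IsSymm ∧ T.1.IsSymm ∧ S * T = A := by
  obtain ⟨_, hS, ⟨S, rfl⟩, hSA⟩ := exists_isSymm_isUnit_mul_isSymm A.1
  exact ⟨S⁻¹, S * A, isSymm_inv_of_isSymm hS, hSA, inv_mul_cancel_left S A⟩

end Decomposition

section Products

variable {ι : Type*} {l F : ι → Type*} [∀ i, Fintype (l i)] [∀ i, DecidableEq (l i)]
  [∀ i, Field (F i)] {M : Subgroup (∀ i, symplecticGroup (l i) (F i))}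

lemma levi_mem_of_forall_upper_mem_of_forall_lower_mem
    (hupper : ∀ X : ∀ i, symmMatrix (l i) (F i), (fun i => upper (X i)) ∈ M)
    (hlower : ∀ X : ∀ i, symmMatrix (l i) (F i), (fun i => lower (X i)) ∈ M)
    (A : ∀ i, (Matrix (l i) (l i) (F i))ˣ) : (fun i => levi (A i)) ∈ M := by
  have hsymm (S : ∀ i, (Matrix (l i) (l i) (F i))ˣ) (hS : ∀ i, (S i).1.IsSymm) :
      (fun i => levi (S i)) ∈ M := by
    rw [funext fun i => levi_eq_of_isSymm (S i) (hS i)]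
    exact mul_mem (mul_mem (mul_mem (hupper _) (hlower _)) (hupper _))
      (mul_mem (mul_mem (hupper _) (hlower _)) (hupper _))
  choose S T hS hT hST using fun i => exists_isSymm_mul_isSymm_eq (A i)
  rw [funext fun i => (congrArg levi (hST i).symm).trans (map_mul levi (S i) (T i))]
  exact mul_mem (hsymm S hS) (hsymm T hT)

lemma eq_top_of_forall_upper_mem_of_forall_lower_mem
    (hupper : ∀ X : ∀ i, symmMatrix (l i) (F i), (fun i => upper (X i)) ∈ M)
    (hlower : ∀ X : ∀ i, symmMatrix (l i) (F i), (fun i => lower (X i)) ∈ M) : M = ⊤ := by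
  refine (Subgroup.eq_top_iff' M).2 fun g => ?_
  choose X A Y Z hg using fun i => exists_eq_upper_mul_levi_mul_lower_mul_upper (g i)
  rw [funext hg]
  exact mul_mem (mul_mem (mul_mem (hupper X)
    (levi_mem_of_forall_upper_mem_of_forall_lower_mem hupper hlower A)) (hlower Y)) (hupper Z)

/- If `X ↦ A X Aᵀ - X` is bijective on symmetric matrices, every upper unipotent is a commutator
with `levi A`. -/
theorem exists_normalClosure_singleton_eq_top (hl : ∀ i, 3 ≤ Fintype.card (l i)) :
    ∃ z : ∀ i, symplecticGroup (l i) (F i), Subgroup.normalClosure {z} = ⊤ := by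
  choose A hA using fun i =>
    exists_isUnit_forall_mul_mul_transpose_eq_self (F := F i) (hl i)
  let z : ∀ i, symplecticGroup (l i) (F i) := fun i => levi (A i)
  have hz : z ∈ Subgroup.normalClosure {z} := Subgroup.subset_normalClosure rfl
  have hnormal : (Subgroup.normalClosure {z}).Normal := Subgroup.normalClosure_normal
  have hupper (Z : ∀ i, symmMatrix (l i) (F i)) :
      (fun i => upper (Z i)) ∈ Subgroup.normalClosure {z} := by
    choose Y hY hYZ using fun i => exists_isSymm_mul_mul_transpose_sub_eq (hA i) (Z i).2
    let u : ∀ i, symplecticGroup (l i) (F i) := fun i => upper ⟨Y i, hY i⟩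
    have hcomm : (fun i => upper (Z i)) = z * (u * z⁻¹ * u⁻¹) := funext fun i => by
      calc upper (Z i) = upper ((symmMatrix.congruence (A i).1 ⟨Y i, hY i⟩) + -⟨Y i, hY i⟩) :=
            congrArg upper (Subtype.ext (by simp [symmMatrix.congruence, ← hYZ, sub_eq_add_neg]))
        _ = levi (A i) * (u i * (levi (A i))⁻¹ * (u i)⁻¹) := by
          rw [upper_add, upper_neg, ← levi_conj_upper, mul_assoc, mul_assoc, ← mul_assoc (upper _)]
    exact hcomm ▸ mul_mem hz (hnormal.conj_mem _ (inv_mem hz) u)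
  refine ⟨z, eq_top_of_forall_upper_mem_of_forall_lower_mem hupper fun X => ?_⟩
  rw [funext fun i => lower_eq_symJ_conj_upper_inv (X i)]
  exact hnormal.conj_mem _ (inv_mem (hupper X)) fun i => SymplecticGroup.symJ (l i) (F i)

end Products

section Labels

lemma exists_forall_card_fiber_le {l : Type*} [Fintype l] {r e : ℕ} (h : Fintype.card l ≤ r * e) :
    ∃ c : l → Fin r, ∀ x, (Finset.univ.filter (c · = x)).card ≤ e := by
  obtain ⟨f⟩ : Nonempty (l ↪ Fin r × Fin e) := Function.Embedding.nonempty_of_card_le (by simpa)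
  refine ⟨fun a => (f a).1, fun x => ?_⟩
  refine (Finset.card_le_card_of_injOn (fun a => (f a).2) (fun _ _ => Finset.mem_univ _)
    fun a ha b hb hab => f.injective (Prod.ext ?_ hab)).trans_eq (Finset.card_fin e)
  simp only [Finset.coe_filter, Finset.mem_univ, true_and, Set.mem_ofPred_eq] at ha hb
  rw [ha, hb]

lemma exists_perm_symm_image_subset {l : Type*} [Finite l] {S T : Finset l} (h : S.card ≤ T.card) :
    ∃ τ : Equiv.Perm l, ∀ a, τ a ∈ S → a ∈ T := by
  classical
  obtain ⟨T', hT', hcard⟩ := Finset.exists_subset_card_eq h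
  let e : S ≃ T' := Fintype.equivOfCardEq (by simp [hcard])
  refine ⟨e.extendSubtype.symm, fun a ha => hT' ?_⟩
  have hmem := (e ⟨_, ha⟩).2
  rwa [← e.extendSubtype_apply_of_mem _ ha, Equiv.apply_symm_apply] at hmem

lemma exists_label_forall_perm {l : Type*} [Fintype l] {T : Finset l} {r : ℕ}
    (h : Fintype.card l ≤ r * (T.card / 2)) :
    ∃ (c : l → Fin r) (τ : Sym2 (Fin r) → Equiv.Perm l), ∀ p a, c (τ p a) ∈ p → a ∈ T := by
  classical
  obtain ⟨c, hc⟩ := exists_forall_card_fiber_le h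
  have hfiber (p : Sym2 (Fin r)) : (Finset.univ.filter (c · ∈ p)).card ≤ T.card := by
    induction p using Sym2.ind with | _ x y => ?_
    calc (Finset.univ.filter (c · ∈ s(x, y))).card
        ≤ (Finset.univ.filter (c · = x)).card + (Finset.univ.filter (c · = y)).card := by
          simp only [Sym2.mem_iff, Finset.filter_or]
          exact Finset.card_union_le _ _
      _ ≤ T.card := by linarith [hc x, hc y, Nat.mul_div_le T.card 2]
  choose τ hτ using fun p => exists_perm_symm_image_subset (hfiber p)
  exact ⟨c, τ, fun p a ha => hτ p a (by simpa using ha)⟩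

end Labels

section Support

variable {l R κ : Type*} [CommRing R]

/-- All nonzero entries of the symmetric matrix `X` lie in rows and columns belonging to `T`. -/
def symmMatrix.SupportedOn (X : symmMatrix l R) (T : Finset l) : Prop :=
  ∀ a b, X.1 a b ≠ 0 → a ∈ T ∧ b ∈ T

/-- The part of `X` formed by the entries whose unordered pair of row and column labels is `p`. -/
def symmMatrix.labelPart [DecidableEq κ] (c : l → κ) (X : symmMatrix l R) (p : Sym2 κ) :
    symmMatrix l R :=
  ⟨of fun a b => if s(c a, c b) = p then X.1 a b else 0, IsSymm.ext fun a b => by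
    simp only [of_apply, Sym2.eq_swap (a := c b), X.2.apply a b]⟩

lemma symmMatrix.sum_labelPart [DecidableEq κ] [Fintype κ] (c : l → κ) (X : symmMatrix l R) :
    ∑ p, labelPart c X p = X := by
  ext a b
  simp [labelPart, Matrix.sum_apply]

variable [Fintype l] [DecidableEq l]

/-- The permutation matrix of `τ`, as an invertible matrix. -/
def permUnit (τ : Equiv.Perm l) : (Matrix l l R)ˣ :=
  permMatrixHom.toHomUnits τ

lemma symmMatrix.congruence_permUnit_submatrix (τ : Equiv.Perm l) (X : symmMatrix l R) :
    congruence (permUnit τ).1 ⟨X.1.submatrix τ τ, X.2.submatrix τ⟩ = X := by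
  refine Subtype.ext ?_
  change τ⁻¹.permMatrix R * X.1.submatrix τ τ * (τ⁻¹.permMatrix R)ᵀ = X.1
  rw [transpose_permMatrix, inv_inv, PEquiv.toMatrix_toPEquiv_mul, PEquiv.mul_toMatrix_toPEquiv]
  ext a b
  simp

end Support

section Generation

variable {ι : Type*} {l F : ι → Type*} [∀ i, Fintype (l i)] [∀ i, DecidableEq (l i)]
  [∀ i, Field (F i)]

/-- The families of symmetric matrices whose upper unipotents belong to `M`. -/
def upperFamilies (M : Subgroup (∀ i, symplecticGroup (l i) (F i))) :
    AddSubgroup (∀ i, symmMatrix (l i) (F i)) where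
  carrier := {X | (fun i => upper (X i)) ∈ M}
  zero_mem' := by
    simp only [Set.mem_ofPred_eq, Pi.zero_apply, upper_zero]
    exact one_mem M
  add_mem' hX hY := by
    simp only [Set.mem_ofPred_eq, Pi.add_apply, upper_add] at hX hY ⊢
    exact mul_mem hX hY
  neg_mem' hX := by
    simp only [Set.mem_ofPred_eq, Pi.neg_apply, upper_neg] at hX ⊢
    exact inv_mem hX

lemma eq_top_of_forall_perm {M : Subgroup (∀ i, symplecticGroup (l i) (F i))}
    {T : ∀ i, Finset (l i)} {κ : Type*} [Finite κ] {c : ∀ i, l i → κ}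
    {τ : ∀ i, Sym2 κ → Equiv.Perm (l i)} (hτ : ∀ i p a, c i (τ i p a) ∈ p → a ∈ T i)
    (hsymJ : (fun i => SymplecticGroup.symJ (l i) (F i)) ∈ M)
    (hperm : ∀ p, (fun i => levi (permUnit (τ i p))) ∈ M)
    (hT : ∀ X : ∀ i, symmMatrix (l i) (F i), (∀ i, symmMatrix.SupportedOn (X i) (T i)) →
      (fun i => upper (X i)) ∈ M) : M = ⊤ := by
  classical
  have := Fintype.ofFinite κ
  have hlabel (X : ∀ i, symmMatrix (l i) (F i)) (p : Sym2 κ) :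
      (fun i => symmMatrix.labelPart (c i) (X i) p) ∈ upperFamilies M := by
    let Y (i : ι) := symmMatrix.labelPart (c i) (X i) p
    let Y' (i : ι) : symmMatrix (l i) (F i) :=
      ⟨(Y i).1.submatrix (τ i p) (τ i p), (Y i).2.submatrix _⟩
    have hsupp (i : ι) : symmMatrix.SupportedOn (Y' i) (T i) := fun a b hab => by
      have hp : s(c i (τ i p a), c i (τ i p b)) = p := by_contra fun h => hab (if_neg h)
      have ha := Sym2.mem_mk_left (c i (τ i p a)) (c i (τ i p b))
      have hb := Sym2.mem_mk_right (c i (τ i p a)) (c i (τ i p b))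
      rw [hp] at ha hb
      exact ⟨hτ i p a ha, hτ i p b hb⟩
    have hY : (fun i => upper (Y i)) = (fun i => levi (permUnit (τ i p))) *
        (fun i => upper (Y' i)) * (fun i => levi (permUnit (τ i p)))⁻¹ := funext fun i => by
      rw [← symmMatrix.congruence_permUnit_submatrix (τ i p) (Y i), ← levi_conj_upper]
      rfl
    exact (hY ▸ mul_mem (mul_mem (hperm p) (hT Y' hsupp)) (inv_mem (hperm p)) :)
  have hupper (X : ∀ i, symmMatrix (l i) (F i)) : (fun i => upper (X i)) ∈ M := by
    have hsum : X = ∑ p, fun i => symmMatrix.labelPart (c i) (X i) p := funext fun i => by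
      rw [Finset.sum_apply, symmMatrix.sum_labelPart]
    exact hsum ▸ (upperFamilies M).sum_mem fun p _ => hlabel X p
  refine eq_top_of_forall_upper_mem_of_forall_lower_mem hupper fun X => ?_
  rw [funext fun i => lower_eq_symJ_conj_upper_inv (X i)]
  exact mul_mem (mul_mem hsymJ (inv_mem (hupper X))) (inv_mem hsymJ)

theorem exists_finite_subset_forall_eq_top {T : ∀ i, Finset (l i)} {r : ℕ}
    (hr : ∀ i, Fintype.card (l i) ≤ r * ((T i).card / 2)) :
    ∃ S : Set (∀ i, symplecticGroup (l i) (F i)), S.Finite ∧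
      ∀ M : Subgroup (∀ i, symplecticGroup (l i) (F i)), S ⊆ M →
        (∀ X : ∀ i, symmMatrix (l i) (F i), (∀ i, symmMatrix.SupportedOn (X i) (T i)) →
          (fun i => upper (X i)) ∈ M) → M = ⊤ := by
  choose c τ hτ using fun i => exists_label_forall_perm (hr i)
  refine ⟨insert (fun i => SymplecticGroup.symJ (l i) (F i))
    (Set.range fun p i => levi (permUnit (τ i p))), (Set.finite_range _).insert _, ?_⟩
  intro M hS hT
  exact eq_top_of_forall_perm hτ (hS (Set.mem_insert _ _))
    (fun p => hS (Set.mem_insert_of_mem _ ⟨p, rfl⟩)) hT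

end Generation

section ExtendByOne

variable {k k' l R : Type*} [Fintype k] [DecidableEq k] [Fintype k'] [DecidableEq k'] [Fintype l]
  [DecidableEq l] [CommRing R]

/-- For `P` with `Pᵀ P = 1`, the embedding of matrix monoids that lets a matrix act on the range of
`P` and fixes its orthogonal complement. It is not additive. -/
def extendByOne (P : Matrix l k R) (hP : Pᵀ * P = 1) : Matrix k k R →* Matrix l l R where
  toFun g := 1 + P * (g - 1) * Pᵀ
  map_one' := by simp
  map_mul' g h := by
    calc 1 + P * (g * h - 1) * Pᵀ
        = 1 + P * (h - 1) * Pᵀ + P * (g - 1) * Pᵀ + P * (g - 1) * (Pᵀ * P) * (h - 1) * Pᵀ := by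
          rw [hP]
          simp only [Matrix.mul_sub, Matrix.sub_mul, Matrix.mul_one, Matrix.mul_assoc]
          abel
      _ = (1 + P * (g - 1) * Pᵀ) * (1 + P * (h - 1) * Pᵀ) := by
          simp only [Matrix.mul_add, Matrix.add_mul, Matrix.mul_one, Matrix.one_mul,
            Matrix.mul_assoc]
          abel

lemma extendByOne_apply (P : Matrix l k R) (hP : Pᵀ * P = 1) (g : Matrix k k R) :
    extendByOne P hP g = 1 + P * (g - 1) * Pᵀ := rfl

lemma commute_extendByOne {P : Matrix l k R} (hP : Pᵀ * P = 1) {Q : Matrix l k' R}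
    (hQ : Qᵀ * Q = 1) (hPQ : Pᵀ * Q = 0) (g : Matrix k k R) (h : Matrix k' k' R) :
    Commute (extendByOne P hP g) (extendByOne Q hQ h) := by
  have hQP : Qᵀ * P = 0 := by rw [← transpose_transpose P, ← transpose_mul, hPQ, transpose_zero]
  have hgh : P * (g - 1) * Pᵀ * (Q * (h - 1) * Qᵀ) = 0 := by
    calc _ = P * (g - 1) * (Pᵀ * Q) * (h - 1) * Qᵀ := by simp only [Matrix.mul_assoc]
      _ = 0 := by simp [hPQ]
  have hhg : Q * (h - 1) * Qᵀ * (P * (g - 1) * Pᵀ) = 0 := by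
    calc _ = Q * (h - 1) * (Qᵀ * P) * (g - 1) * Pᵀ := by simp only [Matrix.mul_assoc]
      _ = 0 := by simp [hQP]
  have hcomm : Commute (P * (g - 1) * Pᵀ) (Q * (h - 1) * Qᵀ) := hgh.trans hhg.symm
  exact (Commute.one_right _).add_right ((Commute.one_left _).add_left hcomm)

end ExtendByOne

section SymplecticEmbedding

variable {k k' l R : Type*} [CommRing R]

/-- The action of `P` on both summands of a standard symplectic space. -/
def doubled (P : Matrix l k R) : Matrix (l ⊕ l) (k ⊕ k) R :=
  fromBlocks P 0 0 P

lemma transpose_doubled_mul_doubled [Fintype l] (P : Matrix l k R) (Q : Matrix l k' R) :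
    (doubled P)ᵀ * doubled Q = doubled (Pᵀ * Q) := by
  simp [doubled, fromBlocks_transpose, fromBlocks_multiply]

lemma transpose_doubled_mul_self_eq_one [DecidableEq k] [Fintype l] {P : Matrix l k R}
    (hP : Pᵀ * P = 1) : (doubled P)ᵀ * doubled P = 1 := by
  rw [transpose_doubled_mul_doubled, hP, doubled, fromBlocks_one]

variable [Fintype k] [DecidableEq k] [Fintype k'] [DecidableEq k'] [Fintype l] [DecidableEq l]

lemma doubled_mul_J (P : Matrix l k R) : doubled P * J k R = J l R * doubled P := by
  simp [doubled, J, fromBlocks_multiply]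

lemma transpose_doubled_mul_J (P : Matrix l k R) :
    (doubled P)ᵀ * J l R = J k R * (doubled P)ᵀ := by
  simp [doubled, J, fromBlocks_transpose, fromBlocks_multiply]

lemma extendByOne_doubled_mem_symplecticGroup {P : Matrix l k R}
    (hP : (doubled P)ᵀ * doubled P = 1) {g : Matrix (k ⊕ k) (k ⊕ k) R}
    (hg : g ∈ symplecticGroup k R) : extendByOne (doubled P) hP g ∈ symplecticGroup l R := by
  rw [SymplecticGroup.mem_iff] at hg ⊢
  set D := doubled P
  have hcross : D * (g - 1) * Dᵀ * J l R * (D * (gᵀ - 1) * Dᵀ) =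
      D * ((g - 1) * J k R * (gᵀ - 1)) * Dᵀ := by
    calc _ = D * (g - 1) * (Dᵀ * J l R) * D * (gᵀ - 1) * Dᵀ := by simp only [Matrix.mul_assoc]
      _ = D * (g - 1) * J k R * (Dᵀ * D) * (gᵀ - 1) * Dᵀ := by
        rw [transpose_doubled_mul_J]; simp only [Matrix.mul_assoc]; rfl
      _ = _ := by rw [hP]; simp only [Matrix.mul_assoc, Matrix.one_mul]
  calc extendByOne D hP g * J l R * (extendByOne D hP g)ᵀ
      = J l R + D * (g - 1) * (Dᵀ * J l R) + (J l R * D) * (gᵀ - 1) * Dᵀ +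
          D * (g - 1) * Dᵀ * J l R * (D * (gᵀ - 1) * Dᵀ) := by
        simp only [extendByOne_apply, transpose_add, transpose_one, transpose_mul, transpose_sub,
          transpose_transpose, Matrix.add_mul, Matrix.mul_add, Matrix.one_mul, Matrix.mul_one,
          Matrix.mul_assoc]
        abel
    _ = J l R + D * (g * J k R * gᵀ - J k R) * Dᵀ := by
        rw [hcross, transpose_doubled_mul_J, ← doubled_mul_J]
        simp only [Matrix.sub_mul, Matrix.mul_sub, Matrix.mul_one, Matrix.one_mul,
          Matrix.mul_assoc]
        abel
    _ = J l R := by rw [hg, sub_self, Matrix.mul_zero, Matrix.zero_mul, add_zero]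

/-- The symplectic group of `k` acting on the subspace of the standard symplectic space of `l`
spanned by two copies of the range of `P`, where `Pᵀ P = 1`. -/
def symplecticEmbed (P : Matrix l k R) (hP : Pᵀ * P = 1) :
    symplecticGroup k R →* symplecticGroup l R :=
  ((extendByOne (doubled P) (transpose_doubled_mul_self_eq_one hP)).comp
    (symplecticGroup k R).subtype).codRestrict (symplecticGroup l R)
    fun g => extendByOne_doubled_mem_symplecticGroup (transpose_doubled_mul_self_eq_one hP) g.2

lemma coe_symplecticEmbed (P : Matrix l k R) (hP : Pᵀ * P = 1) (g : symplecticGroup k R) :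
    (symplecticEmbed P hP g).1 = 1 + doubled P * (g.1 - 1) * (doubled P)ᵀ := rfl

lemma commute_symplecticEmbed {P : Matrix l k R} (hP : Pᵀ * P = 1) {Q : Matrix l k' R}
    (hQ : Qᵀ * Q = 1) (hPQ : Pᵀ * Q = 0) (g : symplecticGroup k R) (h : symplecticGroup k' R) :
    Commute (symplecticEmbed P hP g) (symplecticEmbed Q hQ h) :=
  Subtype.ext <| commute_extendByOne (transpose_doubled_mul_self_eq_one hP)
    (transpose_doubled_mul_self_eq_one hQ)
    (by rw [transpose_doubled_mul_doubled, hPQ, doubled, fromBlocks_zero]) g.1 h.1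

lemma symplecticEmbed_upper {P : Matrix l k R} (hP : Pᵀ * P = 1) (X : symmMatrix k R) :
    symplecticEmbed P hP (upper X) = upper (symmMatrix.congruence P X) := by
  have hsub : (upper X).1 - 1 = fromBlocks 0 X.1 0 0 := by
    rw [← fromBlocks_one, upper, sub_eq_add_neg, fromBlocks_neg, fromBlocks_add]
    simp
  have hconj : doubled P * (fromBlocks 0 X.1 0 0 : Matrix (k ⊕ k) (k ⊕ k) R) * (doubled P)ᵀ =
      fromBlocks 0 (P * X.1 * Pᵀ) 0 0 := by
    simp [doubled, fromBlocks_transpose, fromBlocks_multiply]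
  refine Subtype.ext ?_
  rw [coe_symplecticEmbed, hsub, hconj, ← fromBlocks_one, fromBlocks_add]
  simp [upper, symmMatrix.congruence]

end SymplecticEmbedding

section Inclusion

variable {l R : Type*} [DecidableEq l] [CommRing R]

/-- The inclusion of the coordinate subspace spanned by `T`. -/
def inclusionMatrix (R : Type*) [CommRing R] (T : Finset l) : Matrix l T R :=
  (1 : Matrix l l R).submatrix id Subtype.val

lemma inclusionMatrix_mul_transpose (T : Finset l) :
    inclusionMatrix R T * (inclusionMatrix R T)ᵀ = diagonal fun a => if a ∈ T then 1 else 0 := by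
  ext a b
  simp only [inclusionMatrix, mul_apply, submatrix_apply, transpose_apply, id_eq, one_apply,
    diagonal_apply, mul_ite, mul_one, mul_zero]
  rw [Finset.sum_coe_sort T fun c => if b = c then if a = c then (1 : R) else 0 else 0,
    Finset.sum_ite_eq]
  grind

variable [Fintype l]

lemma transpose_inclusionMatrix_mul_self (T : Finset l) :
    (inclusionMatrix R T)ᵀ * inclusionMatrix R T = 1 := by
  rw [inclusionMatrix, transpose_submatrix, transpose_one,
    ← submatrix_mul _ _ _ _ _ Function.bijective_id, Matrix.one_mul,
    submatrix_one _ Subtype.val_injective]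

lemma transpose_inclusionMatrix_mul_of_disjoint {T T' : Finset l} (h : Disjoint T T') :
    (inclusionMatrix R T)ᵀ * inclusionMatrix R T' = 0 := by
  ext a b
  have hab : a.1 ≠ b.1 := Finset.disjoint_iff_ne.1 h _ a.2 _ b.2
  simp [inclusionMatrix, mul_apply, one_apply, hab]

lemma symmMatrix.SupportedOn.congruence_eq {X : symmMatrix l R} {T : Finset l}
    (hX : SupportedOn X T) :
    congruence (inclusionMatrix R T) (congruence (inclusionMatrix R T)ᵀ X) = X := by
  have hdiag : (diagonal fun a => if a ∈ T then 1 else 0) * X.1 *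
      (diagonal fun a => if a ∈ T then 1 else 0) = X.1 := by
    ext a b
    rw [mul_diagonal, diagonal_mul]
    by_cases hab : a ∈ T ∧ b ∈ T
    · simp [hab]
    · grind [SupportedOn]
  rw [← inclusionMatrix_mul_transpose] at hdiag
  exact Subtype.ext <| by simpa [congruence, Matrix.mul_assoc] using hdiag

end Inclusion

end SymplecticGroups

section SymplecticProducts

open Function Matrix Set

section Blocks

lemma le_mul_four_mul_div_div_two {n d : ℕ} (h : 3 ≤ d / n) : d ≤ n * 4 * (d / n / 2) := by
  have hn : 0 < n := Nat.pos_of_ne_zero fun hn => by simp [hn] at h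
  calc d ≤ n * (d / n + 1) := (Nat.lt_mul_div_succ d hn).le
    _ ≤ n * (4 * (d / n / 2)) := by gcongr; lia
    _ = n * 4 * (d / n / 2) := (mul_assoc _ _ _).symm

lemma exists_pairwise_disjoint_card_eq (l : Type*) [Fintype l] :
    ∃ T : ℕ → Finset l, Pairwise (Disjoint on T) ∧
      ∀ j, (T j).card = Fintype.card l / 2 ^ (j + 1) := by
  let m (j : ℕ) := Fintype.card l / 2 ^ (j + 1)
  have hm (j : ℕ) : 2 * m j ≤ Fintype.card l / 2 ^ j := by
    have h := Nat.mul_div_le (Fintype.card l / 2 ^ j) 2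
    rwa [Nat.div_div_eq_div_mul, ← pow_succ] at h
  have hlt (j a : ℕ) (ha : a ∈ Finset.Ico (m j) (2 * m j)) : a < Fintype.card l :=
    (Finset.mem_Ico.1 ha).2.trans_le ((hm j).trans (Nat.div_le_self _ _))
  refine ⟨fun j => ((Finset.Ico (m j) (2 * m j)).attachFin (hlt j)).map
    (Fintype.equivFin l).symm.toEmbedding, (pairwise_disjoint_on _).2 fun j j' hjj' => ?_,
    fun j => ?_⟩
  · have hle : 2 * m j' ≤ m j :=
      (hm j').trans (Nat.div_le_div_left (Nat.pow_le_pow_right two_pos hjj') (by positivity))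
    rw [Finset.disjoint_map, Finset.disjoint_left]
    intro a ha ha'
    simp only [Finset.mem_attachFin, Finset.mem_Ico] at ha ha'
    lia
  · rw [Finset.card_map, Finset.card_attachFin, Nat.card_Ico]
    lia

lemma finite_setOf_nonempty_of_pairwise_disjoint {J l : Type*} [Finite l] {T : J → Finset l}
    (hT : Pairwise (Disjoint on T)) : {j | (T j).Nonempty}.Finite := by
  choose a ha using fun j : {j | (T j).Nonempty} => j.2
  refine Set.finite_coe_iff.1 ?_
  exact Finite.of_injective a fun j j' h => by
    by_contra hne
    exact Finset.disjoint_left.1 (hT (Subtype.coe_ne_coe.2 hne)) (ha j) (h ▸ ha j')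

end Blocks

section Chains

variable {ι : Type*} {l F : ι → Type*} [∀ i, Fintype (l i)] [∀ i, DecidableEq (l i)]
  [∀ i, Field (F i)] {H : ℕ → Subgroup (∀ i, symplecticGroup (l i) (F i))}

/- The blocks `T i j` with fixed `j` have a product of symplectic groups embedded; for different `j`
these embedded products commute. -/
theorem IsExhaustion.exists_forall_upper_mem_of_pairwise_disjoint (hH : IsExhaustion H)
    {T : ∀ i, ℕ → Finset (l i)} (hT : ∀ i, Pairwise (Disjoint on T i)) :
    ∃ j t, ∀ X : ∀ i, symmMatrix (l i) (F i), (∀ i, symmMatrix.SupportedOn (X i) (T i j)) →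
      (∀ i, (T i j).card < 3 → X i = 0) → (fun i => upper (X i)) ∈ H t := by
  classical
  let E (i : ι) (j : ℕ) := symplecticEmbed (inclusionMatrix (F i) (T i j))
    (transpose_inclusionMatrix_mul_self (T i j))
  let large (j : ℕ) := {i // 3 ≤ (T i j).card}
  let K (j : ℕ) (i : large j) : Type _ := symplecticGroup (T i.1 j) (F i.1)
  let φ (j : ℕ) (i : ι) : (∀ i, K j i) →* symplecticGroup (l i) (F i) :=
    if hi : 3 ≤ (T i j).card then (E i j).comp (Pi.evalMonoidHom (K j) ⟨i, hi⟩) else 1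
  have hcomm (i : ι) : Pairwise fun j j' => ∀ x y, Commute (φ j i x) (φ j' i y) := by
    intro j j' hne x y
    by_cases hj : 3 ≤ (T i j).card
    · by_cases hj' : 3 ≤ (T i j').card
      · simp only [φ, dif_pos hj, dif_pos hj']
        exact commute_symplecticEmbed (transpose_inclusionMatrix_mul_self _)
          (transpose_inclusionMatrix_mul_self _)
          (transpose_inclusionMatrix_mul_of_disjoint (hT i hne)) _ _
      · simp [φ, hj']
    · simp [φ, hj]
  have hfin (i : ι) : {j | φ j i ≠ 1}.Finite := by
    refine (finite_setOf_nonempty_of_pairwise_disjoint (hT i)).subset fun j hj => ?_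
    by_contra hempty
    exact hj (dif_neg (by simp [Finset.not_nonempty_iff_eq_empty.1 hempty]))
  choose z hz using fun j => exists_normalClosure_singleton_eq_top
    (l := fun i : large j => T i.1 j) (F := fun i => F i.1)
    fun i => (Fintype.card_coe (T i.1 j)).symm ▸ i.2
  obtain ⟨j, t, hjt⟩ := hH.exists_range_le (fun j => MonoidHom.pi (φ j)) z hz
    (exists_simultaneous_conj_pi φ hcomm hfin)
  refine ⟨j, t, fun X hX hzero => hjt ⟨fun i =>
    upper (symmMatrix.congruence (inclusionMatrix (F i.1) (T i.1 j))ᵀ (X i.1)), funext fun i => ?_⟩⟩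
  by_cases hi : 3 ≤ (T i j).card
  · simp only [MonoidHom.pi_apply, φ, dif_pos hi, MonoidHom.comp_apply, Pi.evalMonoidHom_apply, E]
    rw [symplecticEmbed_upper, (hX i).congruence_eq]
  · simp [φ, hi, hzero i (not_le.1 hi), upper_zero]

lemma natCard_symplecticGroup_le (l R : Type*) [Fintype l] [DecidableEq l] [CommRing R] [Finite R] :
    Nat.card (symplecticGroup l R) ≤ Nat.card R ^ (2 * Fintype.card l) ^ 2 := by
  calc Nat.card (symplecticGroup l R) ≤ Nat.card (l ⊕ l → l ⊕ l → R) :=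
        Nat.card_le_card_of_injective (β := Matrix (l ⊕ l) (l ⊕ l) R) _ Subtype.val_injective
    _ = Nat.card R ^ (2 * Fintype.card l) ^ 2 := by
        simp [Nat.card_fun, ← pow_mul, two_mul, sq]

lemma IsExhaustion.captured_setOf_card_lt [∀ i, Finite (F i)] (hH : IsExhaustion H)
    (hl : ∀ i, 3 ≤ Fintype.card (l i))
    (hF : ∀ n, BddAbove ((fun i => Nat.card (F i)) '' {i | Fintype.card (l i) = n})) (n : ℕ) :
    Captured H {i | Fintype.card (l i) < n} := by
  obtain ⟨z, hz⟩ := exists_normalClosure_singleton_eq_top (F := F) hl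
  refine (captured_biUnion hH.monotone (finite_Iio n) (X := fun m => {i | Fintype.card (l i) = m})
    fun m _ => ?_).subset fun i hi => mem_biUnion (mem_Iio.2 hi) rfl
  obtain ⟨Q, hQ⟩ := hF m
  exact hH.captured_of_natCard_le hz (n := Q ^ (2 * m) ^ 2) fun i hi =>
    (natCard_symplecticGroup_le _ _).trans <| hi ▸ Nat.pow_le_pow_left (hQ ⟨i, hi, rfl⟩) _

lemma IsExhaustion.exists_forall_upper_mem_of_supportedOn [∀ i, Finite (F i)]
    (hH : IsExhaustion H) (hl : ∀ i, 3 ≤ Fintype.card (l i))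
    (hF : ∀ n, BddAbove ((fun i => Nat.card (F i)) '' {i | Fintype.card (l i) = n})) :
    ∃ (T : ∀ i, Finset (l i)) (r t : ℕ), (∀ i, Fintype.card (l i) ≤ r * ((T i).card / 2)) ∧
      ∀ X : ∀ i, symmMatrix (l i) (F i), (∀ i, symmMatrix.SupportedOn (X i) (T i)) →
        (fun i => upper (X i)) ∈ H t := by
  classical
  choose T hdisj hcard using fun i => exists_pairwise_disjoint_card_eq (l i)
  obtain ⟨j, s, hs⟩ := hH.exists_forall_upper_mem_of_pairwise_disjoint (F := F) hdisj
  obtain ⟨t, ht⟩ := hH.captured_setOf_card_lt hl hF (3 * 2 ^ (j + 1))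
  set A : Set ι := {i | Fintype.card (l i) < 3 * 2 ^ (j + 1)}
  have hA (i : ι) : i ∈ A ↔ (T i j).card < 3 := by
    rw [hcard, Nat.div_lt_iff_lt_mul (by positivity)]
    rfl
  refine ⟨A.piecewise (fun _ => Finset.univ) (T · j), 2 ^ (j + 3), max s t, fun i => ?_,
    fun X hX => ?_⟩
  · by_cases hi : i ∈ A
    · rw [A.piecewise_eq_of_mem _ _ hi, Finset.card_univ]
      calc Fintype.card (l i) ≤ 2 ^ (j + 3) * 1 := by grind
        _ ≤ 2 ^ (j + 3) * (Fintype.card (l i) / 2) := by have := hl i; gcongr; lia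
    · rw [A.piecewise_eq_of_notMem _ _ hi, hcard, pow_add 2 (j + 1) 2]
      exact le_mul_four_mul_div_div_two (by grind)
  · let X₀ : ∀ i, symmMatrix (l i) (F i) := A.piecewise 0 X
    have hsplit : (fun i => upper (X i)) = (fun i => upper (X₀ i)) *
        A.piecewise (fun i => upper (X i)) 1 := funext fun i => by
      by_cases hi : i ∈ A <;> simp [X₀, hi, upper_zero]
    rw [hsplit]
    refine mul_mem (hH.monotone (le_max_left s t) (hs _ (fun i => ?_) fun i hi => ?_))
      (hH.monotone (le_max_right s t) (ht (piecewise_one_mem_subproduct A _)))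
    · by_cases hi : i ∈ A
      · simp [X₀, hi, symmMatrix.SupportedOn]
      · simpa [X₀, hi] using hX i
    · exact piecewise_eq_of_mem A _ _ ((hA i).2 hi)

end Chains

section UnboundedSequences

lemma exists_infinite_strictMonoOn_of_not_bddAbove {α : Type*} [LinearOrder α] {q : ℕ → α}
    {A : Set ℕ} (hA : ¬ BddAbove (q '' A)) : ∃ I ⊆ A, I.Infinite ∧ StrictMonoOn q I := by
  have hnext (s : Finset ℕ) : ∃ n ∈ A, ∀ m ∈ s, m < n ∧ q m < q n := by
    have : Nonempty α := ⟨q 0⟩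
    obtain ⟨Q, hQ⟩ := ((finite_Iic (s.sup id)).image q).bddAbove
    obtain ⟨_, ⟨n, hn, rfl⟩, hQn⟩ := not_bddAbove_iff.1 hA Q
    have hlt {m : ℕ} (hm : m ≤ s.sup id) : q m < q n := (hQ (mem_image_of_mem q hm)).trans_lt hQn
    refine ⟨n, hn, fun m hm => ?_⟩
    have hms : m ≤ s.sup id := Finset.le_sup (f := id) hm
    exact ⟨hms.trans_lt (not_le.1 fun h => (hlt h).false), hlt hms⟩
  obtain ⟨f, hf, hlt⟩ := exists_seq_of_forall_finset_exists (· ∈ A)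
    (fun m n => m < n ∧ q m < q n) fun s _ => hnext s
  have hmono : StrictMono f := fun m n hmn => (hlt m n hmn).1
  refine ⟨range f, range_subset_iff.2 hf, infinite_range_of_injective hmono.injective, ?_⟩
  rintro _ ⟨m, rfl⟩ _ ⟨n, rfl⟩ hmn
  exact (hlt m n (hmono.lt_iff_lt.1 hmn)).2

end UnboundedSequences

end SymplecticProducts

end UncountableCofinality

open UncountableCofinality in
theorem stmt_18_general {ι : Type*} {l F : ι → Type*} [∀ i, Fintype (l i)]
    [∀ i, DecidableEq (l i)] [∀ i, Field (F i)] [∀ i, Finite (F i)]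
    (hl : ∀ i, 3 ≤ Fintype.card (l i))
    (hF : ∀ n, BddAbove ((fun i => Nat.card (F i)) '' {i | Fintype.card (l i) = n}))
    {H : ℕ → Subgroup (∀ i, Matrix.symplecticGroup (l i) (F i))} (hH : IsExhaustion H) :
    ∃ t, H t = ⊤ := by
  obtain ⟨T, r, t, hr, hT⟩ := hH.exists_forall_upper_mem_of_supportedOn hl hF
  obtain ⟨S, hSfin, hS⟩ := exists_finite_subset_forall_eq_top (F := F) hr
  have := hSfin.to_subtype
  obtain ⟨s, hs⟩ := hH.exists_forall_mem ((↑) : S → ∀ i, Matrix.symplecticGroup (l i) (F i))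
  exact ⟨max s t, hS _ (fun g hg => hH.monotone (le_max_left s t) (hs ⟨g, hg⟩))
    fun X hX => hH.monotone (le_max_right s t) (hT X hX)⟩

/-- Let `dₙ ≥ 3` and let `Fₙ` be finite fields (of cardinality `qₙ`) such that there is
no infinite `I ⊆ ℕ` on which the `dₙ` are constant and the `qₙ` strictly increasing.
Then `∏ n, Sp(2dₙ, Fₙ)` cannot be written as the union of a countable increasing chain
of proper subgroups. -/
theorem stmt_18 (d : ℕ → ℕ) (F : ℕ → Type*) [∀ n, Field (F n)] [∀ n, Fintype (F n)]
    (hd : ∀ n, 3 ≤ d n)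
    (h2 : ¬ ∃ (I : Set ℕ) (d₀ : ℕ), I.Infinite ∧ (∀ n ∈ I, d n = d₀) ∧
        ∀ n ∈ I, ∀ m ∈ I, n < m → Fintype.card (F n) < Fintype.card (F m)) :
    ¬ ∃ H : ℕ → Subgroup (∀ n, ↥(Matrix.symplecticGroup (Fin (d n)) (F n))),
        Monotone H ∧ (∀ t, H t ≠ ⊤) ∧
          ∀ g : ∀ n, ↥(Matrix.symplecticGroup (Fin (d n)) (F n)), ∃ t, g ∈ H t := by
  rintro ⟨H, hmono, hproper, hcover⟩
  have hF (d₀ : ℕ) : BddAbove ((fun n => Fintype.card (F n)) '' {n | d n = d₀}) := by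
    by_contra hunbounded
    obtain ⟨I, hI, hinf, hlt⟩ :=
      UncountableCofinality.exists_infinite_strictMonoOn_of_not_bddAbove hunbounded
    exact h2 ⟨I, d₀, hinf, hI, fun _ hn _ hm => hlt hn hm⟩
  obtain ⟨t, ht⟩ := stmt_18_general (by simpa using hd) (by simpa using hF) ⟨hmono, hcover⟩
  exact hproper t ht
end
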